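/- arXiv:1708.03812 — 7 statements merged into one kernel-verified Lean document; each statement's English description precedes it below -/
import Mathlib

section
/- Let G and H be finite undirected graphs with active vertex sets A_G, A_H that are active-cut equivalent for l-edge connectivity via a surjection f : A_G → A_H. Let F be a finite multiset of unordered pairs of active vertices of G, let G+F be the multigraph obtained from G by adding one edge for each pair in F, and let H+f(F) be the multigraph obtained from H by adding, for each pair {a,b} in F with f(a) ≠ f(b), the edge {f(a),f(b)}. Then for all distinct active vertices s, t of G with f(s) ≠ f(t): the minimum size of an edge cut of G+F separating s from t is < l if and only if the minimum size of an edge cut of H+f(F) separating f(s) from f(t) is < l, and when these minima are < l they are equal. Moreover, if f(s) = f(t), then every edge cut of G+F separating s from t has size ≥ l. -/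
/-!
Since the added edges join active vertices only, the number of them that cross a cut depends
only on the partition which the cut induces on the active vertices
(`addedCutSize_eq_of_equiv`). Consequently, among the cuts inducing a given partition, a
cheapest one in `G + F` is a minimal separating cut of the active set in `G`, and likewise in
`H + f(F)`.

A cut of `G + F` of size `< l` is thus replaced by a minimal separating cut of `G`, to which
condition (1) of the equivalence gives a cut of `H` of the same size and the same partition
(`exists_push_cut`). The partition of a cut of `H + f(F)` of size `< l` is pulled back along `f`
to a minimal separating cut of `G`; this has size `< l` by condition (2), and then condition (1)
shows that it is exactly as large as the minimal cut of `H` (`exists_pull_cut`). Equivalent cuts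
satisfy `a ∈ S ↔ f a ∈ S'` for active `a`, so vertices with the same image are never separated by
a cut of size `< l`.
-/


/-- An edge cut of a finite graph on vertex type `V`, represented by one side `S`
of the bipartition `(S, Sᶜ)`: both parts must be nonempty. -/
def IsEdgeCut {V : Type*} (S : Set V) : Prop :=
  S.Nonempty ∧ Sᶜ.Nonempty

/-- The size of the edge cut `(S, Sᶜ)` in `G`: the number of edges of `G`
with one endpoint in `S` and the other outside `S`. -/
noncomputable def cutSize {V : Type*} (G : SimpleGraph V) (S : Set V) : ℕ :=
  Nat.card {p : V × V // G.Adj p.1 p.2 ∧ p.1 ∈ S ∧ p.2 ∉ S}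

/-- The edge cut `(S, Sᶜ)` separates the vertex set `X`. -/
def SeparatesE {V : Type*} (S X : Set V) : Prop :=
  (X ∩ S).Nonempty ∧ (X \ S).Nonempty

/-- `(S, Sᶜ)` is a minimal separating edge cut of `X` in `G`: it is an edge cut
separating `X`, of minimum size among all edge cuts inducing the same
partition of `X`. -/
def IsMinSepEdgeCut {V : Type*} (G : SimpleGraph V) (X S : Set V) : Prop :=
  IsEdgeCut S ∧ SeparatesE S X ∧
    ∀ S' : Set V, IsEdgeCut S' → X ∩ S' = X ∩ S → cutSize G S ≤ cutSize G S'

/-- `G` (with active vertices `AG`) and `H` (with active vertices `AH`) are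
active-cut equivalent for `l`-edge connectivity via the surjection `f`. -/
def ActiveCutEquivEdge {V W : Type*} (G : SimpleGraph V) (H : SimpleGraph W)
    (AG : Set V) (AH : Set W) (f : V → W) (l : ℕ) : Prop :=
  Set.MapsTo f AG AH ∧ Set.SurjOn f AG AH ∧
  (∀ S : Set V, IsMinSepEdgeCut G AG S → cutSize G S < l →
    ∃ S' : Set W, IsMinSepEdgeCut H AH S' ∧ cutSize H S' = cutSize G S ∧
      f '' (AG ∩ S) = AH ∩ S' ∧ f '' (AG ∩ Sᶜ) = AH ∩ S'ᶜ) ∧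
  (∀ S : Set V, IsMinSepEdgeCut G AG S → l ≤ cutSize G S →
    ∀ S' : Set W, IsMinSepEdgeCut H AH S' →
      f '' (AG ∩ S) = AH ∩ S' → f '' (AG ∩ Sᶜ) = AH ∩ S'ᶜ → l ≤ cutSize H S')

open Classical in
/-- The number (with multiplicity) of the added pairs in `F` crossing the
cut `(S, Sᶜ)`. -/
noncomputable def addedCutSize {V : Type*} (F : Multiset (Sym2 V)) (S : Set V) : ℕ :=
  Multiset.countP (fun e => ∃ a b, e = s(a, b) ∧ a ∈ S ∧ b ∉ S) F

open Classical in
/-- The multiset of pairs obtained by mapping each pair `{a, b}` of `F` with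
`f a ≠ f b` to `{f a, f b}`. -/
noncomputable def mappedPairs {V W : Type*} (f : V → W) (F : Multiset (Sym2 V)) :
    Multiset (Sym2 W) :=
  Multiset.filter (fun e => ¬ e.IsDiag) (F.map (Sym2.map f))

/-- The minimum size of an edge cut of the multigraph `G + F` separating `s`
from `t`. -/
noncomputable def minAugCut {V : Type*} (G : SimpleGraph V) (F : Multiset (Sym2 V))
    (s t : V) : ℕ :=
  sInf {n | ∃ S : Set V, IsEdgeCut S ∧ s ∈ S ∧ t ∉ S ∧
    n = cutSize G S + addedCutSize F S}

theorem isEdgeCut_of_mem {V : Type*} {S : Set V} {s t : V} (hs : s ∈ S) (ht : t ∉ S) :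
    IsEdgeCut S :=
  ⟨⟨s, hs⟩, ⟨t, ht⟩⟩

theorem exists_isMinSepEdgeCut {V : Type*} (G : SimpleGraph V) {X S : Set V} {s t : V}
    (hsX : s ∈ X) (htX : t ∈ X) (hs : s ∈ S) (ht : t ∉ S) :
    ∃ S₀, IsMinSepEdgeCut G X S₀ ∧ (∀ a ∈ X, a ∈ S₀ ↔ a ∈ S) ∧
      cutSize G S₀ ≤ cutSize G S := by
  let P : Set (Set V) := {T | IsEdgeCut T ∧ X ∩ T = X ∩ S}
  have hP : S ∈ P := ⟨isEdgeCut_of_mem hs ht, rfl⟩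
  obtain ⟨S₀, ⟨hcut, hX⟩, hmin⟩ :=
    (InvImage.wf (cutSize G) Nat.lt_wfRel.wf).has_min P ⟨S, hP⟩
  have hle : ∀ T ∈ P, cutSize G S₀ ≤ cutSize G T := fun T hT => not_lt.1 (hmin T hT)
  have hmem : ∀ a ∈ X, a ∈ S₀ ↔ a ∈ S := fun a ha => by
    have := Set.ext_iff.1 hX a
    simpa [ha] using this
  refine ⟨S₀, ⟨hcut, ⟨⟨s, hsX, (hmem s hsX).2 hs⟩, ⟨t, htX, fun h => ht ((hmem t htX).1 h)⟩⟩,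
    fun T hT hTX => hle T ⟨hT, hTX.trans hX⟩⟩, hmem, hle S hP⟩

theorem mem_iff_of_image_eq {V W : Type*} {AG S : Set V} {AH S' : Set W} {f : V → W}
    (h₁ : f '' (AG ∩ S) = AH ∩ S') (h₂ : f '' (AG ∩ Sᶜ) = AH ∩ S'ᶜ) {a : V} (ha : a ∈ AG) :
    a ∈ S ↔ f a ∈ S' := by
  constructor
  · intro h
    exact (h₁.subset ⟨a, ⟨ha, h⟩, rfl⟩).2
  · intro h
    by_contra hn
    exact (h₂.subset ⟨a, ⟨ha, hn⟩, rfl⟩).2 h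

theorem image_eq_of_mem_iff {V W : Type*} {AG S : Set V} {AH S' : Set W} {f : V → W}
    (hm : Set.MapsTo f AG AH) (hsurj : Set.SurjOn f AG AH)
    (h : ∀ a ∈ AG, a ∈ S ↔ f a ∈ S') : f '' (AG ∩ S) = AH ∩ S' := by
  ext w
  constructor
  · rintro ⟨a, ⟨ha, haS⟩, rfl⟩
    exact ⟨hm ha, (h a ha).1 haS⟩
  · rintro ⟨hw, hwS⟩
    obtain ⟨a, ha, rfl⟩ := hsurj hw
    exact ⟨a, ⟨ha, (h a ha).2 hwS⟩, rfl⟩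

theorem exists_crossing_iff {U : Type*} {T : Set U} {x y : U} :
    (∃ c d, s(x, y) = s(c, d) ∧ c ∈ T ∧ d ∉ T) ↔ (x ∈ T ∧ y ∉ T) ∨ (y ∈ T ∧ x ∉ T) := by
  constructor
  · rintro ⟨c, d, hcd, hc, hd⟩
    rcases Sym2.eq_iff.1 hcd with ⟨rfl, rfl⟩ | ⟨rfl, rfl⟩
    · exact Or.inl ⟨hc, hd⟩
    · exact Or.inr ⟨hc, hd⟩
  · rintro (⟨hx, hy⟩ | ⟨hy, hx⟩)
    · exact ⟨x, y, rfl, hx, hy⟩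
    · exact ⟨y, x, Sym2.eq_swap, hy, hx⟩

/-- Whether an added pair crosses a cut is determined by the sides of its two (active)
endpoints; pairs collapsed by `f` cross neither of two equivalent cuts. -/
theorem addedCutSize_eq_of_equiv {V W : Type*} {AG : Set V} {f : V → W}
    {F : Multiset (Sym2 V)} (hF : ∀ e ∈ F, ∃ a b, a ∈ AG ∧ b ∈ AG ∧ e = s(a, b))
    {S : Set V} {S' : Set W} (h : ∀ a ∈ AG, a ∈ S ↔ f a ∈ S') :
    addedCutSize (mappedPairs f F) S' = addedCutSize F S := by
  classical
  unfold addedCutSize mappedPairs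
  rw [Multiset.countP_filter, Multiset.countP_map, ← Multiset.countP_eq_card_filter]
  refine Multiset.countP_congr rfl fun e he => ?_
  obtain ⟨a, b, ha, hb, rfl⟩ := hF e he
  rw [Sym2.map_mk, exists_crossing_iff, exists_crossing_iff, Sym2.mk_isDiag_iff, h a ha, h b hb]
  refine propext ⟨fun H => H.1, fun H => ⟨H, fun hab => ?_⟩⟩
  rw [hab] at H
  tauto

section Transfer

variable {V W : Type*} {G : SimpleGraph V} {H : SimpleGraph W} {AG : Set V} {AH : Set W}
  {f : V → W} {l : ℕ} {F : Multiset (Sym2 V)}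

/-- A small cut of `G + F` is carried to a cut of `H + f(F)` that is no larger and induces the
corresponding partition of the active vertices. -/
theorem exists_push_cut (hequiv : ActiveCutEquivEdge G H AG AH f l)
    (hF : ∀ e ∈ F, ∃ a b, a ∈ AG ∧ b ∈ AG ∧ e = s(a, b))
    {S : Set V} {s t : V} (hsA : s ∈ AG) (htA : t ∈ AG) (hs : s ∈ S) (ht : t ∉ S)
    (hlt : cutSize G S + addedCutSize F S < l) :
    ∃ S' : Set W, (∀ a ∈ AG, a ∈ S ↔ f a ∈ S') ∧
      cutSize H S' + addedCutSize (mappedPairs f F) S' ≤ cutSize G S + addedCutSize F S := by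
  obtain ⟨-, -, h1, -⟩ := hequiv
  obtain ⟨S₀, hmin, hmem, hle⟩ := exists_isMinSepEdgeCut G hsA htA hs ht
  obtain ⟨S', -, hsize, hi, hi'⟩ := h1 S₀ hmin (by omega)
  have hiff : ∀ a ∈ AG, a ∈ S ↔ f a ∈ S' := fun a ha =>
    (hmem a ha).symm.trans (mem_iff_of_image_eq hi hi' ha)
  refine ⟨S', hiff, ?_⟩
  rw [addedCutSize_eq_of_equiv hF hiff]
  omega

/-- A small cut of `H + f(F)` between images of active vertices is pulled back to a cut of
`G + F` that is no larger and induces the corresponding partition of the active vertices. -/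
theorem exists_pull_cut (hequiv : ActiveCutEquivEdge G H AG AH f l)
    (hF : ∀ e ∈ F, ∃ a b, a ∈ AG ∧ b ∈ AG ∧ e = s(a, b))
    {S' : Set W} {s t : V} (hsA : s ∈ AG) (htA : t ∈ AG) (hs : f s ∈ S') (ht : f t ∉ S')
    (hlt : cutSize H S' + addedCutSize (mappedPairs f F) S' < l) :
    ∃ S : Set V, (∀ a ∈ AG, a ∈ S ↔ f a ∈ S') ∧
      cutSize G S + addedCutSize F S ≤ cutSize H S' + addedCutSize (mappedPairs f F) S' := by
  obtain ⟨hm, hsurj, h1, h2⟩ := hequiv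
  obtain ⟨T', hmin', hmem', hle'⟩ := exists_isMinSepEdgeCut H (hm hsA) (hm htA) hs ht
  obtain ⟨S, hmin, hmem, -⟩ :=
    exists_isMinSepEdgeCut G (S := f ⁻¹' S') hsA htA hs ht
  have hiff : ∀ a ∈ AG, a ∈ S ↔ f a ∈ T' := fun a ha =>
    (hmem a ha).trans (hmem' _ (hm ha)).symm
  have hi : f '' (AG ∩ S) = AH ∩ T' := image_eq_of_mem_iff hm hsurj hiff
  have hi' : f '' (AG ∩ Sᶜ) = AH ∩ T'ᶜ :=
    image_eq_of_mem_iff hm hsurj fun a ha => not_congr (hiff a ha)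
  have hsmall : cutSize G S < l := by
    by_contra! hge
    have := h2 S hmin hge T' hmin' hi hi'
    omega
  obtain ⟨T'', hmin'', hsize, hj, -⟩ := h1 S hmin hsmall
  -- `T'` and `T''` induce the same partition and are both minimal, so their sizes agree.
  have hle'' : cutSize H T'' ≤ cutSize H T' := hmin''.2.2 T' hmin'.1 (hi.symm.trans hj)
  refine ⟨S, hmem, ?_⟩
  rw [addedCutSize_eq_of_equiv (f := f) (S' := S') hF hmem]
  omega

end Transfer

theorem minAugCut_le {V : Type*} (G : SimpleGraph V) (F : Multiset (Sym2 V)) {S : Set V}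
    {s t : V} (hs : s ∈ S) (ht : t ∉ S) :
    minAugCut G F s t ≤ cutSize G S + addedCutSize F S :=
  Nat.sInf_le ⟨S, isEdgeCut_of_mem hs ht, hs, ht, rfl⟩

/-- The infimum defining `minAugCut` is over a nonempty set (it contains the cut `{s}`), hence
attained. -/
theorem exists_eq_minAugCut {V : Type*} (G : SimpleGraph V) (F : Multiset (Sym2 V))
    {s t : V} (hst : s ≠ t) :
    ∃ S : Set V, s ∈ S ∧ t ∉ S ∧ minAugCut G F s t = cutSize G S + addedCutSize F S := by
  have hne : {n | ∃ S : Set V, IsEdgeCut S ∧ s ∈ S ∧ t ∉ S ∧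
      n = cutSize G S + addedCutSize F S}.Nonempty :=
    ⟨_, {s}, isEdgeCut_of_mem rfl hst.symm, rfl, hst.symm, rfl⟩
  obtain ⟨S, -, hs, ht, h⟩ := Nat.sInf_mem hne
  exact ⟨S, hs, ht, h⟩

theorem stmt0 {V W : Type*} [Fintype V] [Fintype W]
    (G : SimpleGraph V) (H : SimpleGraph W)
    (AG : Set V) (AH : Set W) (f : V → W) (l : ℕ)
    (hequiv : ActiveCutEquivEdge G H AG AH f l)
    (F : Multiset (Sym2 V))
    (hF : ∀ e ∈ F, ∃ a b, a ∈ AG ∧ b ∈ AG ∧ e = s(a, b)) :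
    ∀ s t, s ∈ AG → t ∈ AG → s ≠ t →
      (f s ≠ f t →
        (minAugCut G F s t < l ↔ minAugCut H (mappedPairs f F) (f s) (f t) < l) ∧
        (minAugCut G F s t < l → minAugCut H (mappedPairs f F) (f s) (f t) < l →
          minAugCut G F s t = minAugCut H (mappedPairs f F) (f s) (f t))) ∧
      (f s = f t → ∀ S : Set V, IsEdgeCut S →
        ((s ∈ S ∧ t ∉ S) ∨ (t ∈ S ∧ s ∉ S)) →
        l ≤ cutSize G S + addedCutSize F S) := by
  intro s t hsA htA hst
  refine ⟨fun hfst => ?_, fun hfst S _ hsep => ?_⟩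
  · have hpush : minAugCut G F s t < l →
        minAugCut H (mappedPairs f F) (f s) (f t) ≤ minAugCut G F s t := fun hlt => by
      obtain ⟨S, hs, ht, heq⟩ := exists_eq_minAugCut G F hst
      rw [heq] at hlt ⊢
      obtain ⟨S', hiff, hle⟩ := exists_push_cut hequiv hF hsA htA hs ht hlt
      exact (minAugCut_le _ _ ((hiff s hsA).1 hs) fun h => ht ((hiff t htA).2 h)).trans hle
    have hpull : minAugCut H (mappedPairs f F) (f s) (f t) < l →
        minAugCut G F s t ≤ minAugCut H (mappedPairs f F) (f s) (f t) := fun hlt => by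
      obtain ⟨S', hs, ht, heq⟩ := exists_eq_minAugCut H (mappedPairs f F) hfst
      rw [heq] at hlt ⊢
      obtain ⟨S, hiff, hle⟩ := exists_pull_cut hequiv hF hsA htA hs ht hlt
      exact (minAugCut_le _ _ ((hiff s hsA).2 hs) fun h => ht ((hiff t htA).1 h)).trans hle
    exact ⟨⟨fun h => (hpush h).trans_lt h, fun h => (hpull h).trans_lt h⟩,
      fun h h' => le_antisymm (hpull h') (hpush h)⟩
  · by_contra! hlt
    rcases hsep with ⟨hs, ht⟩ | ⟨ht, hs⟩
    · obtain ⟨S', hiff, -⟩ := exists_push_cut hequiv hF hsA htA hs ht hlt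
      exact ht ((hiff t htA).2 (hfst ▸ (hiff s hsA).1 hs))
    · obtain ⟨S', hiff, -⟩ := exists_push_cut hequiv hF htA hsA ht hs hlt
      exact hs ((hiff s hsA).2 (hfst ▸ (hiff t htA).1 ht))
end

section
/- Let G be a finite undirected graph with active vertex set A_G, and let S be a 2-edge-connected component of G, i.e., an equivalence class of the relation in which u ~ v if and only if u = v or there exist two pairwise edge-disjoint paths between u and v in G. Let H be the graph obtained from G by contracting S to a single vertex s (identifying all vertices of S with s, mapping the endpoints of edges accordingly, and discarding loops), let A_H be the image of A_G under this identification, and let f : A_G → A_H map every active vertex of S to s and fix every other active vertex. Then G and H are active-cut equivalent for 2-edge connectivity via f. -/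
/-- `u` and `v` are related iff `u = v` or there are two pairwise edge-disjoint
paths between them in `G`. -/
def TwoEdgeConnRel {V : Type*} (G : SimpleGraph V) (u v : V) : Prop :=
  u = v ∨ ∃ p q : G.Walk u v, p.IsPath ∧ q.IsPath ∧ ∀ e ∈ p.edges, e ∉ q.edges

theorem rel_iff {V : Type*} {G : SimpleGraph V} {u v : V} :
    TwoEdgeConnRel G u v ↔
      ∃ p q : G.Walk u v, p.IsPath ∧ q.IsPath ∧ ∀ e ∈ p.edges, e ∉ q.edges := by
  constructor
  · rintro (rfl | h)
    · exact ⟨.nil, .nil, by simp, by simp, by simp⟩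
    · exact h
  · exact Or.inr

/-- Edge-disjoint walks suffice, because a walk can be shortened to a path using a subset of its
edges. -/
theorem rel_of_walks {V : Type*} {G : SimpleGraph V} {u v : V} (p q : G.Walk u v)
    (h : ∀ e ∈ p.edges, e ∉ q.edges) : TwoEdgeConnRel G u v := by
  classical
  refine rel_iff.2 ⟨p.bypass, q.bypass, p.bypass_isPath, q.bypass_isPath, fun e he he' => ?_⟩
  exact h e (p.edges_bypass_subset_edges he) (q.edges_bypass_subset_edges he')

/-- If `p` and `q` witness that `u` belongs to the class of `v0` and `p` passes through a neighbour
`x` of `u`, then `x` is in the class too: use the tail of `p` after `x`, and `x u` followed by `q`.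
The tail avoids the edge `x u` because the path `p` visits `u` only at its start. -/
theorem rel_of_mem_support {V : Type*} {G : SimpleGraph V} {x u v0 : V} (hxu : G.Adj x u)
    (p q : G.Walk u v0) (hp : p.IsPath) (h : ∀ e ∈ p.edges, e ∉ q.edges) (hx : x ∈ p.support) :
    TwoEdgeConnRel G x v0 := by
  classical
  refine rel_of_walks (p.dropUntil x hx) (.cons hxu q) fun e he he' => ?_
  rw [SimpleGraph.Walk.edges_cons, List.mem_cons] at he'
  rcases he' with rfl | he'
  · have hu : u ∈ (p.dropUntil x hx).support := SimpleGraph.Walk.snd_mem_support_of_mem_edges _ he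
    have hu' : u ∈ (p.takeUntil x hx).support := SimpleGraph.Walk.start_mem_support _
    have hnd := hp.support_nodup
    rw [← p.take_spec hx, SimpleGraph.Walk.support_append] at hnd
    rw [SimpleGraph.Walk.mem_support_iff] at hu
    rcases hu with hu | hu
    · exact hxu.ne hu.symm
    · exact (List.nodup_append.1 hnd).2.2 u hu' u hu rfl
  · exact h e (p.edges_dropUntil_subset_edges hx he) he'

/-- The initial segment of a walk up to its first vertex in `A`: each of its edges has an endpoint
outside `A`. -/
theorem exists_walk_to_set {V : Type*} {G : SimpleGraph V} (A : Set V) {v v0 : V}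
    (r : G.Walk v v0) (h0 : v0 ∈ A) :
    ∃ w ∈ A, ∃ r' : G.Walk v w, (∀ y ∈ r'.support, y ∈ r.support) ∧
      ∀ e ∈ r'.edges, ∃ y ∈ e, y ∉ A := by
  induction r with
  | nil => exact ⟨_, h0, .nil, by simp, by simp⟩
  | @cons a b d hab r ih =>
    by_cases ha : a ∈ A
    · exact ⟨a, ha, .nil, by simp, by simp⟩
    · obtain ⟨w, hw, r', h1, h2⟩ := ih h0
      refine ⟨w, hw, .cons hab r', ?_, ?_⟩
      · intro y hy
        rw [SimpleGraph.Walk.support_cons, List.mem_cons] at hy ⊢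
        exact hy.imp id (h1 y)
      · intro e he
        rw [SimpleGraph.Walk.edges_cons, List.mem_cons] at he
        rcases he with rfl | he
        · exact ⟨a, by simp, ha⟩
        · exact h2 e he

/-- The rerouting step, for the case where `r` first meets the two disjoint paths on `p`. -/
theorem rel_of_reroute {V : Type*} {G : SimpleGraph V} {x u v v0 w : V} (hxu : G.Adj x u)
    (hxv : G.Adj x v) (huv : u ≠ v) (p q : G.Walk u v0) (h : ∀ e ∈ p.edges, e ∉ q.edges)
    (hxp : x ∉ p.support) (hxq : x ∉ q.support) (r : G.Walk v w) (hxr : x ∉ r.support)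
    (hr : ∀ e ∈ r.edges, ∃ y ∈ e, y ∉ q.support) (hw : w ∈ p.support) :
    TwoEdgeConnRel G x v0 := by
  classical
  refine rel_of_walks (.cons hxu q) (.cons hxv (r.append (p.dropUntil w hw))) fun e he he' => ?_
  simp only [SimpleGraph.Walk.edges_cons, SimpleGraph.Walk.edges_append, List.mem_cons,
    List.mem_append] at he he'
  rcases he with rfl | he
  · rcases he' with he' | he' | he'
    · rw [Sym2.eq_iff] at he'
      rcases he' with ⟨_, h'⟩ | ⟨h', _⟩
      · exact huv h'
      · exact hxv.ne h'
    · exact hxr (SimpleGraph.Walk.fst_mem_support_of_mem_edges _ he')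
    · exact hxp (SimpleGraph.Walk.fst_mem_support_of_mem_edges _
        (p.edges_dropUntil_subset_edges hw he'))
  · rcases he' with rfl | he' | he'
    · exact hxq (SimpleGraph.Walk.fst_mem_support_of_mem_edges _ he)
    · obtain ⟨y, hy, hyq⟩ := hr e he'
      exact hyq (SimpleGraph.Walk.mem_support_of_mem_edges he hy)
    · exact h e (p.edges_dropUntil_subset_edges hw he') he

theorem eq_of_adj_of_adj {V : Type*} {G : SimpleGraph V} {x u v v0 : V}
    (hx : ¬ TwoEdgeConnRel G x v0) (hxu : G.Adj x u) (hxv : G.Adj x v)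
    (hu : TwoEdgeConnRel G u v0) (hv : TwoEdgeConnRel G v v0) : u = v := by
  by_contra huv
  obtain ⟨p, q, hp, hq, h⟩ := rel_iff.1 hu
  obtain ⟨r, r₂, hr, -, h'⟩ := rel_iff.1 hv
  have hxp : x ∉ p.support := fun hm => hx (rel_of_mem_support hxu p q hp h hm)
  have hxq : x ∉ q.support := fun hm =>
    hx (rel_of_mem_support hxu q p hq (fun e he he' => h e he' he) hm)
  have hxr : x ∉ r.support := fun hm => hx (rel_of_mem_support hxv r r₂ hr h' hm)
  obtain ⟨w, hw, r', hr1, hr2⟩ := exists_walk_to_set {y | y ∈ p.support ∨ y ∈ q.support} r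
    (Or.inl p.end_mem_support)
  have hxr' : x ∉ r'.support := fun hm => hxr (hr1 x hm)
  rcases hw with hw | hw
  · refine hx (rel_of_reroute hxu hxv huv p q h hxp hxq r' hxr' (fun e he => ?_) hw)
    obtain ⟨y, hy, hyA⟩ := hr2 e he
    exact ⟨y, hy, fun hm => hyA (Or.inr hm)⟩
  · refine hx (rel_of_reroute hxu hxv huv q p (fun e he he' => h e he' he) hxq hxp r' hxr'
      (fun e he => ?_) hw)
    obtain ⟨y, hy, hyA⟩ := hr2 e he
    exact ⟨y, hy, fun hm => hyA (Or.inl hm)⟩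

theorem two_le_cutSize_of_walks {V : Type*} [Finite V] {G : SimpleGraph V} {T : Set V} {u v : V}
    (p q : G.Walk u v) (h : ∀ e ∈ p.edges, e ∉ q.edges) (hu : u ∈ T) (hv : v ∉ T) :
    2 ≤ cutSize G T := by
  obtain ⟨d, hd, hd1, hd2⟩ := p.exists_boundary_dart T hu hv
  obtain ⟨d', hd', hd1', hd2'⟩ := q.exists_boundary_dart T hu hv
  refine Finite.one_lt_card_iff_nontrivial.2
    ⟨⟨(d.fst, d.snd), d.adj, hd1, hd2⟩, ⟨(d'.fst, d'.snd), d'.adj, hd1', hd2'⟩, fun heq => ?_⟩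
  have h2 : d = d' := SimpleGraph.Dart.ext _ _ (congrArg Subtype.val heq)
  subst h2
  exact h d.edge (List.mem_map_of_mem hd) (List.mem_map_of_mem hd')

theorem two_le_cutSize {V : Type*} [Finite V] {G : SimpleGraph V} {T : Set V} {u v : V}
    (h : TwoEdgeConnRel G u v) (huv : ¬ (u ∈ T ↔ v ∈ T)) : 2 ≤ cutSize G T := by
  obtain ⟨p, q, -, -, h⟩ := rel_iff.1 h
  by_cases hu : u ∈ T
  · exact two_le_cutSize_of_walks p q h hu (by tauto)
  · exact two_le_cutSize_of_walks p.reverse q.reverse (by simpa using h)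
      (by tauto : v ∈ T) hu

/-- If `f` maps the edges of `G` between different fibres onto the edges of `H`, and distinct
such edges have distinct images, then pulling back along `f` preserves cut sizes. -/
theorem cutSize_preimage {V W : Type*} {G : SimpleGraph V} {H : SimpleGraph W} (f : V → W)
    (hadj : ∀ a b, H.Adj a b ↔ a ≠ b ∧ ∃ u v, G.Adj u v ∧ f u = a ∧ f v = b)
    (hinj : ∀ u v u' v', G.Adj u v → G.Adj u' v' → f u ≠ f v → f u = f u' → f v = f v' →
      u = u' ∧ v = v')
    (T : Set W) : cutSize G (f ⁻¹' T) = cutSize H T := by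
  have hne : ∀ a b, a ∈ T → b ∉ T → a ≠ b := fun a b ha hb hab => hb (hab ▸ ha)
  refine Nat.card_eq_of_bijective
    (fun p => ⟨(f p.1.1, f p.1.2), (hadj _ _).2 ⟨hne _ _ p.2.2.1 p.2.2.2, _, _, p.2.1, rfl, rfl⟩,
      p.2.2.1, p.2.2.2⟩) ⟨?_, ?_⟩
  · rintro ⟨⟨u, v⟩, h1, h2, h3⟩ ⟨⟨u', v'⟩, h1', h2', h3'⟩ heq
    simp only [Subtype.mk.injEq, Prod.mk.injEq] at heq ⊢
    exact hinj u v u' v' h1 h1' (hne _ _ h2 h3) heq.1 heq.2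
  · rintro ⟨⟨a, b⟩, h1, h2, h3⟩
    obtain ⟨-, u, v, huv, rfl, rfl⟩ := (hadj a b).1 h1
    exact ⟨⟨(u, v), huv, h2, h3⟩, rfl⟩

theorem stmt2 {V : Type*} [Fintype V] (G : SimpleGraph V) (AG : Set V)
    (S : Set V)
    (hS : ∃ v0 ∈ S, S = {u | TwoEdgeConnRel G u v0})
    (s : V) (hs : s ∈ S)
    (c : V → V) (hc1 : ∀ x ∈ S, c x = s) (hc2 : ∀ x ∉ S, c x = x)
    (H : SimpleGraph ↥(Sᶜ ∪ {s} : Set V))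
    (hH : ∀ a b : ↥(Sᶜ ∪ {s} : Set V), H.Adj a b ↔
      (a.val ≠ b.val ∧ ∃ u v, G.Adj u v ∧ c u = a.val ∧ c v = b.val))
    (f : V → ↥(Sᶜ ∪ {s} : Set V)) (hf : ∀ x, (f x).val = c x) :
    ActiveCutEquivEdge G H AG (f '' AG) f 2 := by
  obtain ⟨v0, hv0, hS⟩ := hS
  have hmem : ∀ u, u ∈ S ↔ TwoEdgeConnRel G u v0 := fun u => by
    conv_lhs => rw [hS]
    rfl
  have hf_iff : ∀ u v, f u = f v ↔ c u = c v := fun u v => by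
    rw [← hf, ← hf, Subtype.ext_iff]
  have hc : ∀ u v, c u = c v → u = v ∨ (u ∈ S ∧ v ∈ S) := by
    intro u v h
    by_cases hu : u ∈ S <;> by_cases hv : v ∈ S
    · exact Or.inr ⟨hu, hv⟩
    · rw [hc1 u hu, hc2 v hv] at h
      exact absurd (h ▸ hs) hv
    · rw [hc2 u hu, hc1 v hv] at h
      exact absurd (h ▸ hs) hu
    · rw [hc2 u hu, hc2 v hv] at h
      exact Or.inl h
  have hone : ∀ x u v, x ∉ S → u ∈ S → v ∈ S → G.Adj x u → G.Adj x v → u = v :=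
    fun x u v hx hu hv hxu hxv =>
      eq_of_adj_of_adj (fun h => hx ((hmem x).2 h)) hxu hxv ((hmem u).1 hu) ((hmem v).1 hv)
  have hcut : ∀ T, cutSize G (f ⁻¹' T) = cutSize H T := by
    refine cutSize_preimage f (fun a b => ?_) ?_
    · rw [hH]
      simp only [ne_eq, Subtype.ext_iff, hf]
    · intro u v u' v' h h' hne hu hv
      rw [ne_eq, hf_iff] at hne
      rw [hf_iff] at hu hv
      rcases hc _ _ hu with rfl | ⟨hu1, hu2⟩
      · refine ⟨rfl, ?_⟩
        rcases hc _ _ hv with hv | ⟨hv1, hv2⟩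
        · exact hv
        · refine hone u v v' (fun hu => hne ?_) hv1 hv2 h h'
          rw [hc1 u hu, hc1 v hv1]
      · have hvS : v ∉ S := fun hv => hne (by rw [hc1 u hu1, hc1 v hv])
        rcases hc _ _ hv with rfl | ⟨hv1, _⟩
        · exact ⟨hone v u u' hvS hu1 hu2 h.symm h'.symm, rfl⟩
        · exact absurd hv1 hvS
  have hsurj : Function.Surjective f := by
    intro w
    refine ⟨w.val, Subtype.ext ?_⟩
    rw [hf]
    rcases w.2 with hw | hw
    · exact hc2 _ hw
    · rw [Set.mem_singleton_iff] at hw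
      rw [hw, hc1 s hs]
  have hedge : ∀ T, IsEdgeCut T → IsEdgeCut (f ⁻¹' T) := fun T hT =>
    ⟨hT.1.preimage hsurj, hT.2.preimage hsurj⟩
  refine ⟨Set.mapsTo_image f AG, Set.surjOn_image f AG, ?_, ?_⟩
  · intro T hT hlt
    obtain ⟨T', rfl⟩ : ∃ T', T = f ⁻¹' T' := by
      have hside : ∀ u ∈ S, (u ∈ T ↔ v0 ∈ T) := fun u hu => by
        by_contra h
        exact absurd (two_le_cutSize ((hmem u).1 hu) h) (by omega)
      refine ⟨{w | w.val ∈ T}, Set.ext fun x => ?_⟩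
      rw [Set.mem_preimage, Set.mem_ofPred_eq, hf]
      by_cases hx : x ∈ S
      · rw [hc1 x hx, hside x hx, hside s hs]
      · rw [hc2 x hx]
    obtain ⟨⟨⟨a, ha⟩, ⟨b, hb⟩⟩, ⟨⟨y, hyA, hyT⟩, ⟨z, hzA, hzT⟩⟩, hmin⟩ := hT
    refine ⟨T', ⟨⟨⟨f a, ha⟩, ⟨f b, hb⟩⟩, ⟨⟨f y, ⟨y, hyA, rfl⟩, hyT⟩,
      ⟨f z, ⟨z, hzA, rfl⟩, hzT⟩⟩, ?_⟩, (hcut T').symm, Set.image_inter_preimage f AG T',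
      Set.image_inter_preimage f AG T'ᶜ⟩
    intro U hU hUT
    rw [← hcut, ← hcut]
    refine hmin _ (hedge U hU) (Set.ext fun x => and_congr_right fun hx => ?_)
    have := Set.ext_iff.1 hUT (f x)
    simpa [Set.mem_image_of_mem f hx] using this
  · intro T hT hle T' hT' h1 h2
    rw [← hcut]
    refine hle.trans (hT.2.2 _ (hedge T' hT'.1) (Set.ext fun x => and_congr_right fun hx => ?_))
    constructor
    · intro hxT'
      by_contra hxT
      have : f x ∈ f '' AG ∩ T'ᶜ := h2 ▸ Set.mem_image_of_mem f ⟨hx, hxT⟩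
      exact this.2 hxT'
    · intro hxT
      have : f x ∈ f '' AG ∩ T' := h1 ▸ Set.mem_image_of_mem f ⟨hx, hxT⟩
      exact this.2
end

section
/- Let G be a finite tree with active vertex set A_G, and let v be a vertex of G of degree exactly 2 with v ∉ A_G, with neighbors a and b. Let H be the graph obtained from G by deleting v and adding the edge {a,b}, with active vertex set A_G and f the identity map on A_G. Then G and H are active-cut equivalent for 2-edge connectivity via f. -/
theorem not_adj_of_common_neighbor {V : Type*} {G : SimpleGraph V} (hacyc : G.IsAcyclic)
    {v a b : V} (hva : G.Adj v a) (hvb : G.Adj v b) : ¬ G.Adj a b := by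
  classical
  exact fun h => hacyc.cliqueFree le_rfl {v, a, b}
    (SimpleGraph.is3Clique_triple_iff.2 ⟨hva, hvb, h⟩)

theorem SeparatesE.isEdgeCut {V : Type*} {S X : Set V} (h : SeparatesE S X) : IsEdgeCut S :=
  ⟨h.1.mono Set.inter_subset_right, h.2.mono fun _ hx => hx.2⟩

theorem cutSize_restrict_le {V : Type*} [Finite V] {G : SimpleGraph V} {a b v : V}
    (hva : G.Adj v a) (hvb : G.Adj v b)
    {H : SimpleGraph ↥({v}ᶜ : Set V)}
    (hH : ∀ x y : ↥({v}ᶜ : Set V), H.Adj x y ↔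
      (G.Adj x.val y.val ∨ (x.val = a ∧ y.val = b) ∨ (x.val = b ∧ y.val = a)))
    (S : Set V) : cutSize H (Subtype.val ⁻¹' S) ≤ cutSize G S := by
  unfold cutSize
  -- A cut copy of the new edge is charged to the edge at `v` that is cut by `S`.
  have key : ∀ q : {p : ↥({v}ᶜ : Set V) × ↥({v}ᶜ : Set V) //
      H.Adj p.1 p.2 ∧ p.1 ∈ Subtype.val ⁻¹' S ∧ p.2 ∉ Subtype.val ⁻¹' S},
      ∃ p : {p : V × V // G.Adj p.1 p.2 ∧ p.1 ∈ S ∧ p.2 ∉ S},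
        p.1 = (q.1.1.1, q.1.2.1) ∨
        ((p.1.1 = v ∨ p.1.2 = v) ∧
          ((q.1.1.1 = a ∧ q.1.2.1 = b) ∨ (q.1.1.1 = b ∧ q.1.2.1 = a))) := by
    rintro ⟨⟨x, y⟩, hxy, hx, hy⟩
    simp only [Set.mem_preimage] at hx hy
    rcases (hH x y).1 hxy with h | h
    · exact ⟨⟨(x.1, y.1), h, hx, hy⟩, Or.inl rfl⟩
    · by_cases hvS : v ∈ S
      · refine ⟨⟨(v, y.1), ?_, hvS, hy⟩, Or.inr ⟨Or.inl rfl, h⟩⟩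
        rcases h with h | h <;> simpa [h.2]
      · refine ⟨⟨(x.1, v), ?_, hx, hvS⟩, Or.inr ⟨Or.inr rfl, h⟩⟩
        rcases h with h | h <;> simpa [h.1] using SimpleGraph.Adj.symm ‹_›
  choose F hF using key
  refine Nat.card_le_card_of_injective F fun q q' hqq => ?_
  have h1 := hF q
  have h2 := hF q'
  rw [← hqq] at h2
  generalize F q = p at h1 h2
  obtain ⟨⟨p1, p2⟩, hp⟩ := p
  obtain ⟨⟨⟨x, hxv⟩, ⟨y, hyv⟩⟩, hq, hx, hy⟩ := q
  obtain ⟨⟨⟨x', hxv'⟩, ⟨y', hyv'⟩⟩, hq', hx', hy'⟩ := q'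
  simp only [Prod.mk.injEq, Subtype.mk.injEq] at *
  grind

/-- Non-adjacency of `a` and `b` makes the charging injective: if `G` already had an edge between
`a` and `b`, it would coincide in `H` with the new edge. -/
theorem exists_extend_cutSize_le {V : Type*} [Finite V] {G : SimpleGraph V} {a b v : V}
    (hnab : ¬ G.Adj a b) (hva : G.Adj v a)
    (hnbr : ∀ x, G.Adj v x → x = a ∨ x = b)
    {H : SimpleGraph ↥({v}ᶜ : Set V)}
    (hH : ∀ x y : ↥({v}ᶜ : Set V), H.Adj x y ↔
      (G.Adj x.val y.val ∨ (x.val = a ∧ y.val = b) ∨ (x.val = b ∧ y.val = a)))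
    (T : Set ↥({v}ᶜ : Set V)) :
    ∃ S : Set V, Subtype.val ⁻¹' S = T ∧ cutSize G S ≤ cutSize H T := by
  have ha : a ∈ ({v}ᶜ : Set V) := hva.ne'
  obtain ⟨S, hST, hSv⟩ : ∃ S : Set V, Subtype.val ⁻¹' S = T ∧ (v ∈ S ↔ a ∈ S) := by
    refine ⟨Subtype.val '' T ∪ {x | x = v ∧ ⟨a, ha⟩ ∈ T}, ?_, ?_⟩
    · ext ⟨x, hx⟩
      have hx' : x ≠ v := hx
      simp [hx']
    · have := hva.ne'
      simp [this]
  refine ⟨S, hST, ?_⟩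
  subst hST
  unfold cutSize
  -- The only edge at `v` that can be cut joins `v` to `b`; it is charged to the new edge.
  have key : ∀ p : {p : V × V // G.Adj p.1 p.2 ∧ p.1 ∈ S ∧ p.2 ∉ S},
      ∃ q : {p : ↥({v}ᶜ : Set V) × ↥({v}ᶜ : Set V) //
        H.Adj p.1 p.2 ∧ p.1 ∈ Subtype.val ⁻¹' S ∧ p.2 ∉ Subtype.val ⁻¹' S},
        p.1 = (q.1.1.1, q.1.2.1) ∨
        (p.1 = (v, b) ∧ q.1.1.1 = a ∧ q.1.2.1 = b) ∨
        (p.1 = (b, v) ∧ q.1.1.1 = b ∧ q.1.2.1 = a) := by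
    rintro ⟨⟨x, y⟩, hxy, hx, hy⟩
    simp only at hxy hx hy
    by_cases hxv : x = v
    · subst hxv
      obtain rfl : y = b := by grind
      exact ⟨⟨(⟨a, ha⟩, ⟨y, hxy.ne'⟩), (hH _ _).2 (by simp), hSv.1 hx, hy⟩, by simp⟩
    by_cases hyv : y = v
    · subst hyv
      obtain rfl : x = b := by grind [hxy.symm]
      exact ⟨⟨(⟨x, hxv⟩, ⟨a, ha⟩), (hH _ _).2 (by simp), hx, fun h => hy (hSv.2 h)⟩, by simp⟩
    · exact ⟨⟨(⟨x, hxv⟩, ⟨y, hyv⟩), (hH _ _).2 (Or.inl hxy), hx, hy⟩, Or.inl rfl⟩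
  choose F hF using key
  refine Nat.card_le_card_of_injective F fun p p' hpp => ?_
  have h1 := hF p
  have h2 := hF p'
  rw [← hpp] at h2
  generalize F p = q at h1 h2
  obtain ⟨⟨⟨x, hxv⟩, ⟨y, hyv⟩⟩, hq, hx, hy⟩ := q
  obtain ⟨⟨p1, p2⟩, hp⟩ := p
  obtain ⟨⟨p1', p2'⟩, hp'⟩ := p'
  have hnba : ¬ G.Adj b a := fun h => hnab h.symm
  simp only [Set.mem_compl_iff, Set.mem_singleton_iff, Prod.mk.injEq, Subtype.mk.injEq] at *
  grind

theorem stmt4 {V : Type*} [Fintype V] (G : SimpleGraph V)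
    (hconn : G.Connected) (hacyc : G.IsAcyclic)
    (AG : Set V) (v : V) (hv : v ∉ AG)
    (a b : V) (hab : a ≠ b) (hva : G.Adj v a) (hvb : G.Adj v b)
    (hdeg : (G.neighborSet v).ncard = 2)
    (H : SimpleGraph ↥({v}ᶜ : Set V))
    (hH : ∀ x y : ↥({v}ᶜ : Set V), H.Adj x y ↔
      (G.Adj x.val y.val ∨ (x.val = a ∧ y.val = b) ∨ (x.val = b ∧ y.val = a)))
    (f : V → ↥({v}ᶜ : Set V)) (hf : ∀ x ∈ AG, (f x).val = x) :
    ActiveCutEquivEdge G H AG (Subtype.val ⁻¹' AG) f 2 := by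
  have hnab := not_adj_of_common_neighbor hacyc hva hvb
  have hnbr : ∀ x, G.Adj v x → x = a ∨ x = b := by
    have hsub : ({a, b} : Set V) ⊆ G.neighborSet v := by
      rintro x (rfl | rfl)
      · exact hva
      · exact hvb
    have heq := Set.eq_of_subset_of_ncard_le hsub (by rw [hdeg, Set.ncard_pair hab])
    intro x hx
    have hx' : x ∈ ({a, b} : Set V) := heq ▸ hx
    simpa using hx'
  have hne : ∀ x ∈ AG, x ≠ v := fun x hx h => hv (h ▸ hx)
  have himg : ∀ T : Set V, f '' (AG ∩ T) = Subtype.val ⁻¹' AG ∩ Subtype.val ⁻¹' T := by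
    intro T
    ext ⟨x, hx⟩
    constructor
    · rintro ⟨y, hy, hyx⟩
      have : y = x := by rw [← hf y hy.1, hyx]
      exact this ▸ hy
    · intro h
      exact ⟨x, h, Subtype.ext (hf x h.1)⟩
  -- Subsets of `AG` are determined by their traces on the vertices other than `v`.
  have hback : ∀ S T : Set V, (Subtype.val ⁻¹' AG ∩ Subtype.val ⁻¹' S : Set ↥({v}ᶜ : Set V)) =
      Subtype.val ⁻¹' AG ∩ Subtype.val ⁻¹' T → AG ∩ S = AG ∩ T := by
    intro S T h
    ext x
    by_cases hx : x ∈ AG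
    · simpa using Set.ext_iff.1 h ⟨x, hne x hx⟩
    · simp [hx]
  -- By minimality of `S`, no cut of `H` inducing the same partition of `AG` is smaller than `S`.
  have hlow : ∀ S : Set V, IsMinSepEdgeCut G AG S → ∀ T : Set ↥({v}ᶜ : Set V),
      Subtype.val ⁻¹' AG ∩ T = Subtype.val ⁻¹' AG ∩ Subtype.val ⁻¹' S →
      cutSize G S ≤ cutSize H T := by
    intro S hS T hT
    obtain ⟨S', rfl, hle⟩ := exists_extend_cutSize_le hnab hva hnbr hH T
    have h := hback _ _ hT
    have hsep : SeparatesE S' AG := by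
      have hS2 := hS.2.1
      unfold SeparatesE at hS2 ⊢
      rw [← Set.sdiff_self_inter, h, Set.sdiff_self_inter]
      exact hS2
    exact (hS.2.2 S' hsep.isEdgeCut h).trans hle
  refine ⟨fun x hx => ?_, fun x hx => ⟨x.1, hx, Subtype.ext (hf _ hx)⟩, ?_, ?_⟩
  · simpa [hf x hx] using hx
  · intro S hS _
    have hle := cutSize_restrict_le hva hvb hH S
    have hsep : SeparatesE (Subtype.val ⁻¹' S : Set ↥({v}ᶜ : Set V)) (Subtype.val ⁻¹' AG) := by
      obtain ⟨⟨x, hx⟩, ⟨y, hy⟩⟩ := hS.2.1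
      exact ⟨⟨⟨x, hne x hx.1⟩, hx⟩, ⟨⟨y, hne y hy.1⟩, hy⟩⟩
    refine ⟨Subtype.val ⁻¹' S, ⟨hsep.isEdgeCut, hsep, fun T _ hT => hle.trans (hlow S hS T hT)⟩,
      le_antisymm hle (hlow S hS _ rfl), himg S, himg Sᶜ⟩
  · intro S hS h2 S' _ himgS _
    exact h2.trans (hlow S hS S' (himgS.symm.trans (himg S)))
end

section
/- Let G be a finite connected graph with active vertex set A_G, and let B be a biconnected component (block) of G. Let W be the set of vertices of B that are cut vertices of G or belong to A_G, and assume |W| ≥ 3. Let H be the graph obtained from G by deleting all vertices of B not in W together with all edges of B, and adding the edges of a simple cycle through the vertices of W (in an arbitrary order). Then, with active vertex set A_G and f the identity map on A_G, G and H are active-cut equivalent for 2-vertex connectivity via f. -/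
/-!
A vertex cut of size at most one never splits the block or the cycle: a block with at most one
vertex removed stays connected, and so does a cycle. Hence cuts of size at most one can be moved
between `G` and `H` without changing `C` or the partition of the active vertices.

* From `G` to `H`, intersect both sides with the vertex set of `H`. If `C = {v}`, then `v` is a cut
  vertex of `G`, so it survives in `H`, and `B \ {v}` lies on one side, so no cycle edge crosses.
* From `H` to `G` (`exists_lift`), add the deleted vertices `B \ W` to the side containing
  `W \ C`. A crossing edge of `G` would join a vertex of `B \ W` to a vertex outside `B`, but a
  vertex of a block with a neighbour outside the block is a cut vertex (`isCutVertex_of_adj`):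
  otherwise an ear avoiding it could be added to the block.

The second transfer gives both the minimality of the cuts constructed in `H` and the second half of
the equivalence.
-/

/-- A vertex cut `(C, S, T)` of a graph `G`: pairwise disjoint vertex sets with
`C ∪ S ∪ T = V`, `S` and `T` nonempty, and no edge of `G` joining `S` and `T`. -/
def IsVertexCut {V : Type*} (G : SimpleGraph V) (C S T : Set V) : Prop :=
  Disjoint C S ∧ Disjoint C T ∧ Disjoint S T ∧ C ∪ S ∪ T = Set.univ ∧
  S.Nonempty ∧ T.Nonempty ∧ ∀ a ∈ S, ∀ b ∈ T, ¬ G.Adj a b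

/-- The vertex cut `(C, S, T)` separates the vertex set `X`. -/
def SeparatesV {V : Type*} (S T X : Set V) : Prop :=
  (X ∩ S).Nonempty ∧ (X ∩ T).Nonempty

/-- `(C, S, T)` is a minimal separating vertex cut of `X` in `G`: it is a vertex
cut separating `X`, with `|C|` minimum among all vertex cuts inducing the same
partition of `X`. -/
def IsMinSepVertexCut {V : Type*} (G : SimpleGraph V) (X C S T : Set V) : Prop :=
  IsVertexCut G C S T ∧ SeparatesV S T X ∧
    ∀ C' S' T' : Set V, IsVertexCut G C' S' T' →
      X ∩ S' = X ∩ S → X ∩ T' = X ∩ T → C.ncard ≤ C'.ncard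

/-- `G` (with active vertices `AG`) and `H` (with active vertices `AH`) are
active-cut equivalent for `l`-vertex connectivity via the surjection `f`. -/
def ActiveCutEquivVertex {V W : Type*} (G : SimpleGraph V) (H : SimpleGraph W)
    (AG : Set V) (AH : Set W) (f : V → W) (l : ℕ) : Prop :=
  Set.MapsTo f AG AH ∧ Set.SurjOn f AG AH ∧
  (∀ C S T : Set V, IsMinSepVertexCut G AG C S T → C.ncard < l →
    ∃ C' S' T' : Set W, IsMinSepVertexCut H AH C' S' T' ∧
      C'.ncard = C.ncard ∧
      f '' (AG ∩ S) = AH ∩ S' ∧ f '' (AG ∩ T) = AH ∩ T') ∧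
  (∀ C S T : Set V, IsMinSepVertexCut G AG C S T → l ≤ C.ncard →
    ∀ C' S' T' : Set W, IsMinSepVertexCut H AH C' S' T' →
      f '' (AG ∩ S) = AH ∩ S' → f '' (AG ∩ T) = AH ∩ T' → l ≤ C'.ncard)

/-- `v` is a cut vertex of the (connected) graph `G`: its removal disconnects `G`. -/
def IsCutVertex {V : Type*} (G : SimpleGraph V) (v : V) : Prop :=
  ¬ (G.induce ({v}ᶜ : Set V)).Preconnected

/-- A graph has no cut vertex of itself. -/
def HasNoCutVertex {V : Type*} (G : SimpleGraph V) : Prop :=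
  ∀ v : V, (G.induce ({v}ᶜ : Set V)).Preconnected

/-- `B` is (the vertex set of) a biconnected component (block) of `G`: a maximal
connected induced subgraph of `G` containing no cut vertex of itself. -/
def IsBlock {V : Type*} (G : SimpleGraph V) (B : Set V) : Prop :=
  B.Nonempty ∧ (G.induce B).Preconnected ∧ HasNoCutVertex (G.induce B) ∧
    ∀ B' : Set V, B ⊆ B' → (G.induce B').Preconnected →
      HasNoCutVertex (G.induce B') → B' = B

/-! ### Connectivity inside vertex sets -/

/-- `a` and `b` are joined by a walk of `G` all of whose vertices lie in `s`. -/
def ReachIn {V : Type*} (G : SimpleGraph V) (s : Set V) (a b : V) : Prop :=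
  ∃ p : G.Walk a b, ∀ z ∈ p.support, z ∈ s

namespace ReachIn

variable {V : Type*} {G : SimpleGraph V} {s t : Set V} {a b c : V}

lemma symm (h : ReachIn G s a b) : ReachIn G s b a := by
  obtain ⟨p, hp⟩ := h
  exact ⟨p.reverse, by simpa using hp⟩

lemma trans (h : ReachIn G s a b) (h' : ReachIn G s b c) : ReachIn G s a c := by
  obtain ⟨p, hp⟩ := h
  obtain ⟨q, hq⟩ := h'
  refine ⟨p.append q, fun z hz => ?_⟩
  rcases SimpleGraph.Walk.mem_support_append_iff _ _ |>.1 hz with h | h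
  · exact hp z h
  · exact hq z h

lemma mono (h : ReachIn G s a b) (hst : s ⊆ t) : ReachIn G t a b := by
  obtain ⟨p, hp⟩ := h
  exact ⟨p, fun z hz => hst (hp z hz)⟩

lemma of_adj (h : G.Adj a b) (ha : a ∈ s) (hb : b ∈ s) : ReachIn G s a b :=
  ⟨h.toWalk, by simp [ha, hb]⟩

end ReachIn

lemma exists_walk_of_induce {V : Type*} {G : SimpleGraph V} {s : Set V} {a b : s}
    (p : (G.induce s).Walk a b) :
    ∃ q : G.Walk a.val b.val, q.support = p.support.map Subtype.val := by
  induction p with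
  | nil => exact ⟨.nil, by simp⟩
  | cons h p ih =>
    obtain ⟨q, hq⟩ := ih
    refine ⟨.cons (SimpleGraph.comap_adj.1 h) q, ?_⟩
    rw [SimpleGraph.Walk.support_cons, hq, SimpleGraph.Walk.support_cons, List.map_cons]

lemma preconnected_induce_iff {V : Type*} (G : SimpleGraph V) (s : Set V) :
    (G.induce s).Preconnected ↔ ∀ a ∈ s, ∀ b ∈ s, ReachIn G s a b := by
  constructor
  · intro h a ha b hb
    obtain ⟨p⟩ := h ⟨a, ha⟩ ⟨b, hb⟩
    obtain ⟨q, hq⟩ := exists_walk_of_induce p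
    refine ⟨q, fun z hz => ?_⟩
    rw [hq, List.mem_map] at hz
    obtain ⟨w, -, rfl⟩ := hz
    exact w.2
  · rintro h ⟨a, ha⟩ ⟨b, hb⟩
    obtain ⟨p, hp⟩ := h a ha b hb
    exact ⟨p.induce s hp⟩

/-- Removing any vertex `v`, in `s` or not, from a connected set `s` without cut vertices leaves a
connected set. -/
lemma reachIn_diff {V : Type*} {G : SimpleGraph V} {s : Set V}
    (h1 : (G.induce s).Preconnected) (h2 : HasNoCutVertex (G.induce s)) (v : V) :
    ∀ a ∈ s \ {v}, ∀ b ∈ s \ {v}, ReachIn G (s \ {v}) a b := by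
  intro a ha b hb
  by_cases hv : v ∈ s
  · obtain ⟨p, hp⟩ := (preconnected_induce_iff _ _).1 (h2 ⟨v, hv⟩) ⟨a, ha.1⟩
      (by simpa using fun h => ha.2 h) ⟨b, hb.1⟩ (by simpa using fun h => hb.2 h)
    obtain ⟨q, hq⟩ := exists_walk_of_induce p
    refine ⟨q, fun z hz => ?_⟩
    rw [hq, List.mem_map] at hz
    obtain ⟨w, hw, rfl⟩ := hz
    refine ⟨w.2, fun h => hp w hw (Subtype.ext h)⟩
  · rw [Set.sdiff_singleton_eq_self hv] at ha hb ⊢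
    exact (preconnected_induce_iff _ _).1 h1 a ha b hb

lemma hasNoCutVertex_induce {V : Type*} {G : SimpleGraph V} {s : Set V}
    (h : ∀ v, ∀ a ∈ s \ {v}, ∀ b ∈ s \ {v}, ReachIn G (s \ {v}) a b) :
    HasNoCutVertex (G.induce s) := by
  rintro ⟨v, hv⟩
  rw [preconnected_induce_iff]
  rintro ⟨a, ha⟩ ha' ⟨b, hb⟩ hb'
  obtain ⟨p, hp⟩ := h v a ⟨ha, fun h => ha' (Subtype.ext h)⟩ b ⟨hb, fun h => hb' (Subtype.ext h)⟩
  refine ⟨p.induce s fun z hz => (hp z hz).1, fun z hz hzv => ?_⟩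
  have hz' : z.1 ∈ p.support := by
    have := SimpleGraph.Walk.support_induce p (s := s) (fun z hz => (hp z hz).1)
    rw [this] at hz
    simpa using hz
  exact (hp z hz').2 (congrArg Subtype.val hzv)

/-! ### Blocks and cut vertices -/

/-- A vertex of a path still reaches one of the two ends inside the path after another vertex
has been removed. -/
lemma reachIn_end_of_isPath {V : Type*} {G : SimpleGraph V} {y b u w : V} (q : G.Walk y b)
    (hq : q.IsPath) (hu : u ∈ q.support) (hw : w ≠ u) :
    ReachIn G ({z | z ∈ q.support} \ {w}) u y ∨ ReachIn G ({z | z ∈ q.support} \ {w}) u b := by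
  classical
  by_cases h1 : w ∈ (q.takeUntil u hu).support
  · right
    refine ⟨q.dropUntil u hu, fun z hz => ⟨q.support_dropUntil_subset_support hu hz, ?_⟩⟩
    rintro rfl
    have hnd : ((q.takeUntil u hu).append (q.dropUntil u hu)).support.Nodup := by
      rw [q.take_spec hu]; exact hq.support_nodup
    rw [SimpleGraph.Walk.support_append] at hnd
    rw [SimpleGraph.Walk.mem_support_iff] at hz
    exact (List.nodup_append.1 hnd).2.2 z h1 z (hz.resolve_left hw) rfl
  · left
    refine ReachIn.symm ⟨q.takeUntil u hu, fun z hz => ⟨q.support_takeUntil_subset_support hu hz, ?_⟩⟩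
    rintro rfl
    exact h1 hz

/-- A vertex `x` of a nontrivial block with a neighbour `y` outside the block is a cut vertex:
otherwise a path from `y` to the block avoiding `x` would extend the block. -/
lemma isCutVertex_of_adj {V : Type*} {G : SimpleGraph V} {B : Set V} (hB : IsBlock G B)
    {x y b : V} (hx : x ∈ B) (hb : b ∈ B) (hbx : b ≠ x) (hy : y ∉ B) (hxy : G.Adj x y) :
    IsCutVertex G x := by
  classical
  intro hcon
  obtain ⟨-, hB1, hB2, hmax⟩ := hB
  have hyx : y ≠ x := fun h => hy (h ▸ hx)
  obtain ⟨p, hp⟩ := (preconnected_induce_iff _ _).1 hcon y hyx b hbx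
  obtain ⟨q, hq, hqx⟩ : ∃ q : G.Walk y b, q.IsPath ∧ x ∉ q.support :=
    ⟨p.bypass, p.bypass_isPath, fun h => hp x (p.support_bypass_subset_support h) rfl⟩
  -- No vertex removal separates a remaining vertex from the remaining vertices of `B`.
  have key : ∀ w, ∀ u ∈ (B ∪ {z | z ∈ q.support}) \ {w},
      ∃ c ∈ B \ {w}, ReachIn G ((B ∪ {z | z ∈ q.support}) \ {w}) u c := by
    rintro w u ⟨hu | hu, huw⟩
    · exact ⟨u, ⟨hu, huw⟩, SimpleGraph.Walk.nil, by simpa using ⟨Or.inl hu, huw⟩⟩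
    · have hsub : {z | z ∈ q.support} \ {w} ⊆ (B ∪ {z | z ∈ q.support}) \ {w} :=
        Set.sdiff_subset_sdiff_left Set.subset_union_right
      rcases eq_or_ne w x with rfl | hwx
      · refine ⟨b, ⟨hb, hbx⟩, ReachIn.mono (s := {z | z ∈ q.support} \ {w}) ?_ hsub⟩
        exact ⟨q.dropUntil u hu, fun z hz => ⟨q.support_dropUntil_subset_support hu hz, fun h =>
          hqx (h ▸ q.support_dropUntil_subset_support hu hz)⟩⟩
      · rcases reachIn_end_of_isPath q hq hu (Ne.symm huw) with h | h
        · have hyw : y ∈ {z | z ∈ q.support} \ {w} := by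
            obtain ⟨r, hr⟩ := h
            exact hr _ r.end_mem_support
          exact ⟨x, ⟨hx, hwx.symm⟩, (h.mono hsub).trans
            (ReachIn.of_adj hxy.symm (hsub hyw) ⟨Or.inl hx, hwx.symm⟩)⟩
        · have hbw : b ∈ {z | z ∈ q.support} \ {w} := by
            obtain ⟨r, hr⟩ := h
            exact hr _ r.end_mem_support
          exact ⟨b, ⟨hb, hbw.2⟩, h.mono hsub⟩
  have hcut : ∀ w, ∀ u ∈ (B ∪ {z | z ∈ q.support}) \ {w},
      ∀ v ∈ (B ∪ {z | z ∈ q.support}) \ {w},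
      ReachIn G ((B ∪ {z | z ∈ q.support}) \ {w}) u v := by
    intro w u hu v hv
    obtain ⟨c, hc, huc⟩ := key w u hu
    obtain ⟨d, hd, hvd⟩ := key w v hv
    exact huc.trans (((reachIn_diff hB1 hB2 w c hc d hd).mono
      (Set.sdiff_subset_sdiff_left Set.subset_union_left)).trans hvd.symm)
  have hpre : (G.induce (B ∪ {z | z ∈ q.support})).Preconnected := by
    rw [preconnected_induce_iff]
    have hto : ∀ u ∈ B ∪ {z | z ∈ q.support}, ReachIn G (B ∪ {z | z ∈ q.support}) u b := by
      rintro u (hu | hu)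
      · exact ((preconnected_induce_iff _ _).1 hB1 u hu b hb).mono Set.subset_union_left
      · exact ⟨q.dropUntil u hu, fun z hz => Or.inr (q.support_dropUntil_subset_support hu hz)⟩
    exact fun u hu v hv => (hto u hu).trans (hto v hv).symm
  have := hmax _ Set.subset_union_left hpre (hasNoCutVertex_induce hcut)
  exact hy (this ▸ Or.inr q.start_mem_support)

/-! ### Connected sets and vertex cuts -/

namespace IsVertexCut

variable {V : Type*} {G : SimpleGraph V} {C S T : Set V}

lemma symm (h : IsVertexCut G C S T) : IsVertexCut G C T S := by
  obtain ⟨h1, h2, h3, h4, h5, h6, h7⟩ := h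
  refine ⟨h2, h1, h3.symm, ?_, h6, h5, fun a ha b hb hab => h7 b hb a ha hab.symm⟩
  rw [← h4]; ext; simp only [Set.mem_union]; tauto

lemma cover (h : IsVertexCut G C S T) (x : V) (hx : x ∉ C) : x ∈ S ∨ x ∈ T := by
  have : x ∈ C ∪ S ∪ T := h.2.2.2.1 ▸ Set.mem_univ x
  simp only [Set.mem_union] at this
  tauto

lemma mem_of_adj (h : IsVertexCut G C S T) {a b : V} (ha : a ∈ S) (hb : b ∉ C)
    (hab : G.Adj a b) : b ∈ S :=
  (h.cover b hb).resolve_right fun hT => h.2.2.2.2.2.2 a ha b hT hab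

lemma mem_of_reachIn (h : IsVertexCut G C S T) {s : Set V} (hs : ∀ x ∈ s, x ∉ C) {a b : V}
    (hab : ReachIn G s a b) (ha : a ∈ S) : b ∈ S := by
  obtain ⟨p, hp⟩ := hab
  induction p with
  | nil => exact ha
  | cons hadj p ih =>
    refine ih (h.mem_of_adj ha (hs _ (hp _ ?_)) hadj) fun z hz => hp z ?_
    · simp
    · simp [hz]

lemma subset_or_subset (h : IsVertexCut G C S T) {s : Set V} (hs : ∀ x ∈ s, x ∉ C)
    (hc : ∀ a ∈ s, ∀ b ∈ s, ReachIn G s a b) : s ⊆ S ∨ s ⊆ T := by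
  rcases s.eq_empty_or_nonempty with rfl | ⟨a, ha⟩
  · exact Or.inl (Set.empty_subset _)
  · exact (h.cover a (hs a ha)).imp (fun h' b hb => h.mem_of_reachIn hs (hc a ha b hb) h')
      (fun h' b hb => h.symm.mem_of_reachIn hs (hc a ha b hb) h')

lemma isCutVertex {v : V} (h : IsVertexCut G {v} S T) : IsCutVertex G v := by
  intro hcon
  obtain ⟨a, ha⟩ := h.2.2.2.2.1
  obtain ⟨b, hb⟩ := h.2.2.2.2.2.1
  have hbv : b ∉ ({v} : Set V) := fun hv => Set.disjoint_left.1 h.2.1 hv hb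
  have hav : a ∉ ({v} : Set V) := fun hv => Set.disjoint_left.1 h.1 hv ha
  have := h.mem_of_reachIn (s := {v}ᶜ) (fun x hx => hx)
    ((preconnected_induce_iff _ _).1 hcon a hav b hbv) ha
  exact Set.disjoint_left.1 h.2.2.1 this hb

/-- A vertex cut missing all vertices `τ i`, `i ≠ k`, of a closed cycle `τ` has all of them on the
side of `τ (k + 1)`. -/
lemma cycle_mem (h : IsVertexCut G C S T) {n : ℕ} (hn : 2 ≤ n) (τ : ZMod n → V)
    (hadj : ∀ i, G.Adj (τ i) (τ (i + 1))) (k : ZMod n) (hk : ∀ i, i ≠ k → τ i ∉ C)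
    (h1 : τ (k + 1) ∈ S) (i : ZMod n) (hi : i ≠ k) : τ i ∈ S := by
  have : NeZero n := ⟨by omega⟩
  have key : ∀ m : ℕ, m + 1 < n → τ (k + (m + 1 : ℕ)) ∈ S := by
    intro m
    induction m with
    | zero => intro _; simpa using h1
    | succ m ih =>
      intro hm
      have hstep : k + ((m + 1 + 1 : ℕ) : ZMod n) = k + ((m + 1 : ℕ) : ZMod n) + 1 := by
        push_cast; ring
      rw [hstep]
      refine h.mem_of_adj (ih (by omega)) (hk _ ?_) (hadj _)
      rw [← hstep]
      intro h0
      have h0' : ((m + 1 + 1 : ℕ) : ZMod n) = 0 := by simpa using h0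
      rw [ZMod.natCast_eq_zero_iff] at h0'
      exact absurd (Nat.le_of_dvd (by omega) h0') (by omega)
  have hne : (i - k).val ≠ 0 := fun h0 => hi (sub_eq_zero.1 ((ZMod.val_eq_zero _).1 h0))
  obtain ⟨m, hm⟩ := Nat.exists_eq_succ_of_ne_zero hne
  have hlt := ZMod.val_lt (i - k)
  have := key m (by omega)
  rw [← Nat.succ_eq_add_one, ← hm, ZMod.natCast_zmod_val] at this
  simpa using this

end IsVertexCut

/-! ### Lifting cuts from `H` to `G` -/

/-- A vertex cut of `H` (with separator `C`) whose `S`-side contains all surviving block vertices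
outside `C` gives a vertex cut of `G` by adding the deleted block vertices to `S`. -/
lemma lift_of_subset {V : Type*} {G : SimpleGraph V} {B D : Set V}
    (hBD : ∀ x ∈ D, ∀ y ∉ B, ¬ G.Adj x y) {H : SimpleGraph ↥(Dᶜ : Set V)}
    (hH : ∀ x y : ↥(Dᶜ : Set V), G.Adj x.val y.val → ¬ (x.val ∈ B ∧ y.val ∈ B) → H.Adj x y)
    {C S T : Set ↥(Dᶜ : Set V)} (h : IsVertexCut H C S T)
    (hS : ∀ x : ↥(Dᶜ : Set V), x.val ∈ B → x ∉ C → x ∈ S) :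
    IsVertexCut G (Subtype.val '' C) (Subtype.val '' S ∪ D) (Subtype.val '' T) := by
  have hinj : Function.Injective (Subtype.val : ↥(Dᶜ : Set V) → V) := Subtype.val_injective
  have hD : ∀ X : Set ↥(Dᶜ : Set V), Disjoint (Subtype.val '' X) D := by
    intro X
    rw [Set.disjoint_left]
    rintro _ ⟨x, -, rfl⟩ hx
    exact x.2 hx
  have hcov := h.cover
  obtain ⟨h1, h2, h3, -, h5, h6, h7⟩ := h
  refine ⟨?_, (Set.disjoint_image_iff hinj).2 h2, ?_, ?_, ?_, h6.image _, ?_⟩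
  · exact Set.disjoint_union_right.2 ⟨(Set.disjoint_image_iff hinj).2 h1, hD C⟩
  · exact Set.disjoint_union_left.2 ⟨(Set.disjoint_image_iff hinj).2 h3, (hD T).symm⟩
  · rw [Set.eq_univ_iff_forall]
    intro x
    by_cases hx : x ∈ D
    · exact Or.inl (Or.inr (Or.inr hx))
    · by_cases hC : (⟨x, hx⟩ : ↥(Dᶜ : Set V)) ∈ C
      · exact Or.inl (Or.inl ⟨_, hC, rfl⟩)
      · rcases hcov _ hC with h | h
        · exact Or.inl (Or.inr (Or.inl ⟨_, h, rfl⟩))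
        · exact Or.inr ⟨_, h, rfl⟩
  · exact (h5.image _).mono Set.subset_union_left
  · rintro a ha _ ⟨t, ht, rfl⟩ hadj
    have htB : t.val ∉ B := fun hB => Set.disjoint_left.1 h3
      (hS t hB fun hC => Set.disjoint_left.1 h2 hC ht) ht
    rcases ha with ⟨s, hs, rfl⟩ | ha
    · exact h7 s hs t ht (hH s t hadj fun hB => htB hB.2)
    · exact hBD a ha _ htB hadj

/-- A vertex cut of `H` of size at most one leaves the rest of the cycle `τ` on one side, so it lifts
to a vertex cut of `G` with the same separator and the same partition of the vertices of `H`. -/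
lemma exists_lift {V : Type*} {G : SimpleGraph V} {B D : Set V}
    (hBD : ∀ x ∈ D, ∀ y ∉ B, ¬ G.Adj x y) {H : SimpleGraph ↥(Dᶜ : Set V)}
    (hH : ∀ x y : ↥(Dᶜ : Set V), G.Adj x.val y.val → ¬ (x.val ∈ B ∧ y.val ∈ B) → H.Adj x y)
    {n : ℕ} (hn : 2 ≤ n) (τ : ZMod n → ↥(Dᶜ : Set V)) (hadj : ∀ i, H.Adj (τ i) (τ (i + 1)))
    (hτ : ∀ x : ↥(Dᶜ : Set V), x.val ∈ B → ∃ i, τ i = x) (hτinj : Function.Injective τ)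
    {C S T : Set ↥(Dᶜ : Set V)} (h : IsVertexCut H C S T) (hC : C.Subsingleton) :
    ∃ S' T' : Set V, IsVertexCut G (Subtype.val '' C) S' T' ∧
      (∀ x : ↥(Dᶜ : Set V), x.val ∈ S' ↔ x ∈ S) ∧ (∀ x : ↥(Dᶜ : Set V), x.val ∈ T' ↔ x ∈ T) := by
  -- All cycle vertices other than `τ k` avoid the separator.
  obtain ⟨k, hk⟩ : ∃ k, ∀ i, i ≠ k → τ i ∉ C := by
    by_cases hex : ∃ k, τ k ∈ C
    · obtain ⟨k, hk⟩ := hex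
      exact ⟨k, fun i hi hiC => hi (hτinj (hC hiC hk))⟩
    · exact ⟨0, fun i _ hiC => hex ⟨i, hiC⟩⟩
  have hside : ∀ {S T : Set ↥(Dᶜ : Set V)}, IsVertexCut H C S T → τ (k + 1) ∈ S →
      ∀ x : ↥(Dᶜ : Set V), x.val ∈ B → x ∉ C → x ∈ S := by
    intro S T h h1 x hx hxC
    obtain ⟨i, rfl⟩ := hτ x hx
    by_cases hi : i = k
    · -- If `τ k` is not in the separator, it is adjacent to `τ (k + 1)`.
      subst hi
      exact h.mem_of_adj h1 hxC (hadj i).symm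
    · exact h.cycle_mem hn τ hadj k hk h1 i hi
  have hne : k + 1 ≠ k := by
    intro h0
    have : (1 : ZMod n) = 0 := by simpa using h0
    have h1 : ((1 : ℕ) : ZMod n) = 0 := by simpa using this
    rw [ZMod.natCast_eq_zero_iff] at h1
    exact absurd (Nat.le_of_dvd one_pos h1) (by omega)
  rcases h.cover _ (hk _ hne) with h1 | h1
  · refine ⟨_, _, lift_of_subset hBD hH h (hside h h1), fun x => ?_, fun x => ?_⟩
    · simp [show x.val ∉ D from x.2]
    · simp [show x.val ∉ D from x.2]
  · refine ⟨_, _, (lift_of_subset hBD hH h.symm (hside h.symm h1)).symm, fun x => ?_, fun x => ?_⟩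
    · simp [show x.val ∉ D from x.2]
    · simp [show x.val ∉ D from x.2]

/-! ### Equivalence of `G` and `H` -/

theorem stmt6 {V : Type*} [Fintype V] (G : SimpleGraph V)
    (hconn : G.Connected) (AG : Set V)
    (B : Set V) (hB : IsBlock G B)
    (Wset : Set V) (hW : Wset = {x | x ∈ B ∧ (IsCutVertex G x ∨ x ∈ AG)})
    (n : ℕ) (hn : n = Wset.ncard) (h3 : 3 ≤ n)
    (σ : ZMod n → V) (hσinj : Function.Injective σ)
    (hσrange : Set.range σ = Wset)
    (H : SimpleGraph ↥((B \ Wset)ᶜ : Set V))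
    (hH : ∀ x y : ↥((B \ Wset)ᶜ : Set V), H.Adj x y ↔
      ((G.Adj x.val y.val ∧ ¬ (x.val ∈ B ∧ y.val ∈ B)) ∨
        (∃ i : ZMod n, (x.val = σ i ∧ y.val = σ (i + 1)) ∨
          (y.val = σ i ∧ x.val = σ (i + 1)))))
    (f : V → ↥((B \ Wset)ᶜ : Set V)) (hf : ∀ x ∈ AG, (f x).val = x) :
    ActiveCutEquivVertex G H AG (Subtype.val ⁻¹' AG) f 2 := by
  classical
  have hBlock := hB
  obtain ⟨-, hB1, hB2, -⟩ := hB
  have hAG : ∀ x ∈ AG, x ∈ ((B \ Wset)ᶜ : Set V) := by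
    rintro x hx ⟨hxB, hxW⟩
    exact hxW (by rw [hW]; exact ⟨hxB, Or.inr hx⟩)
  have hσW : ∀ i, σ i ∈ Wset := fun i => hσrange ▸ Set.mem_range_self i
  have hWB : Wset ⊆ B := by rw [hW]; exact fun x hx => hx.1
  have hBD : ∀ x ∈ B \ Wset, ∀ y ∉ B, ¬ G.Adj x y := by
    rintro x ⟨hxB, hxW⟩ y hy hxy
    refine hxW ?_
    rw [hW]
    exact ⟨hxB, Or.inl (isCutVertex_of_adj hBlock hxB (hWB (hσW 0))
      (fun h => hxW (h ▸ hσW 0)) hy hxy)⟩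
  have hlift : ∀ C S T : Set ↥((B \ Wset)ᶜ : Set V), IsVertexCut H C S T → C.ncard < 2 →
      ∃ S' T' : Set V, IsVertexCut G (Subtype.val '' C) S' T' ∧
        (∀ x : ↥((B \ Wset)ᶜ : Set V), x.val ∈ S' ↔ x ∈ S) ∧
        (∀ x : ↥((B \ Wset)ᶜ : Set V), x.val ∈ T' ↔ x ∈ T) := by
    intro C S T h hC
    refine exists_lift (n := n) hBD (fun x y h1 h2 => (hH x y).2 (Or.inl ⟨h1, h2⟩)) (by omega)
      (fun i => ⟨σ i, fun h => h.2 (hσW i)⟩) (fun i => (hH _ _).2 (Or.inr ⟨i, Or.inl ⟨rfl, rfl⟩⟩))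
      ?_ ?_ h ?_
    · intro x hx
      have hxW : x.val ∈ Wset := by_contra fun h => x.2 ⟨hx, h⟩
      obtain ⟨i, hi⟩ : x.val ∈ Set.range σ := hσrange.ge hxW
      exact ⟨i, Subtype.ext hi⟩
    · exact fun i j hij => hσinj (congrArg Subtype.val hij)
    · exact (Set.ncard_le_one_iff_subsingleton).1 (by omega)
  -- All active vertices survive in `H`, so equivalence of cuts can be tested on vertices of `H`.
  have himg : ∀ (S : Set V) (S' : Set ↥((B \ Wset)ᶜ : Set V)),
      f '' (AG ∩ S) = Subtype.val ⁻¹' AG ∩ S' ↔ ∀ x, x.val ∈ AG → (x.val ∈ S ↔ x ∈ S') := by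
    intro S S'
    have hfx : ∀ x : ↥((B \ Wset)ᶜ : Set V), x.val ∈ AG → f x.val = x :=
      fun x hx => Subtype.ext (hf _ hx)
    have himage : f '' (AG ∩ S) = Subtype.val ⁻¹' AG ∩ Subtype.val ⁻¹' S := by
      ext x
      constructor
      · rintro ⟨y, ⟨hy, hyS⟩, rfl⟩
        simp only [Set.mem_inter_iff, Set.mem_preimage, hf y hy]
        exact ⟨hy, hyS⟩
      · rintro ⟨hx, hxS⟩
        exact ⟨x.val, ⟨hx, hxS⟩, hfx x hx⟩
    rw [himage, Set.ext_iff]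
    exact forall_congr' fun x => by
      simp only [Set.mem_inter_iff, Set.mem_preimage]; tauto
  have hncard : ∀ C : Set ↥((B \ Wset)ᶜ : Set V), (Subtype.val '' C : Set V).ncard = C.ncard :=
    fun C => Set.ncard_image_of_injective _ Subtype.val_injective
  have htrace : ∀ S S' : Set V, (∀ x : ↥((B \ Wset)ᶜ : Set V), x.val ∈ AG →
      (x.val ∈ S' ↔ x.val ∈ S)) → AG ∩ S' = AG ∩ S := by
    intro S S' h
    ext x
    exact ⟨fun hx => ⟨hx.1, (h ⟨x, hAG x hx.1⟩ hx.1).1 hx.2⟩,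
      fun hx => ⟨hx.1, (h ⟨x, hAG x hx.1⟩ hx.1).2 hx.2⟩⟩
  refine ⟨fun x hx => ?_, fun x hx => ⟨x.val, hx, Subtype.ext (hf _ hx)⟩, ?_, ?_⟩
  · simpa only [Set.mem_preimage, hf x hx] using hx
  · rintro C S T ⟨hcut, ⟨hsS, hsT⟩, hmin⟩ hC
    have hCsub : C.Subsingleton := (Set.ncard_le_one_iff_subsingleton).1 (by omega)
    -- The separator is empty or a cut vertex, hence contained in `H`.
    have hCH : ∀ v ∈ C, v ∈ ((B \ Wset)ᶜ : Set V) := by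
      rintro v hv ⟨hvB, hvW⟩
      obtain rfl : C = {v} := hCsub.eq_singleton_of_mem hv
      exact hvW (by rw [hW]; exact ⟨hvB, Or.inl hcut.isCutVertex⟩)
    have hBside : B \ C ⊆ S ∨ B \ C ⊆ T := by
      refine hcut.subset_or_subset (fun x hx => hx.2) ?_
      rcases hCsub.eq_empty_or_singleton with rfl | ⟨v, rfl⟩
      · rw [Set.sdiff_empty]; exact (preconnected_induce_iff _ _).1 hB1
      · exact reachIn_diff hB1 hB2 v
    have hcutH : IsVertexCut H (Subtype.val ⁻¹' C) (Subtype.val ⁻¹' S) (Subtype.val ⁻¹' T) := by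
      obtain ⟨h1, h2, h3, h4, -, -, h7⟩ := hcut
      refine ⟨h1.preimage _, h2.preimage _, h3.preimage _, ?_, ?_, ?_, ?_⟩
      · rw [← Set.preimage_union, ← Set.preimage_union, h4, Set.preimage_univ]
      · obtain ⟨x, hx, hxS⟩ := hsS
        exact ⟨⟨x, hAG x hx⟩, hxS⟩
      · obtain ⟨x, hx, hxT⟩ := hsT
        exact ⟨⟨x, hAG x hx⟩, hxT⟩
      · intro a ha b hb hab
        have hnot : ¬ (a.val ∈ B ∧ b.val ∈ B) := by
          rintro ⟨haB, hbB⟩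
          rcases hBside with h | h
          · exact Set.disjoint_left.1 h3
              (h ⟨hbB, fun hbC => Set.disjoint_left.1 h2 hbC hb⟩) hb
          · exact Set.disjoint_left.1 h3 ha
              (h ⟨haB, fun haC => Set.disjoint_left.1 h1 haC ha⟩)
        rcases (hH a b).1 hab with h | ⟨i, ⟨ha', hb'⟩ | ⟨hb', ha'⟩⟩
        · exact h7 _ ha _ hb h.1
        · exact hnot ⟨ha' ▸ hWB (hσW _), hb' ▸ hWB (hσW _)⟩
        · exact hnot ⟨ha' ▸ hWB (hσW _), hb' ▸ hWB (hσW _)⟩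
    have hcard : (Subtype.val ⁻¹' C : Set ↥((B \ Wset)ᶜ : Set V)).ncard = C.ncard := by
      rw [← hncard, Set.image_preimage_eq_of_subset]
      exact fun v hv => ⟨⟨v, hCH v hv⟩, rfl⟩
    refine ⟨Subtype.val ⁻¹' C, Subtype.val ⁻¹' S, Subtype.val ⁻¹' T, ⟨hcutH, ⟨?_, ?_⟩, ?_⟩, hcard,
      (himg _ _).2 fun x _ => Iff.rfl, (himg _ _).2 fun x _ => Iff.rfl⟩
    · obtain ⟨x, hx, hxS⟩ := hsS
      exact ⟨⟨x, hAG x hx⟩, hx, hxS⟩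
    · obtain ⟨x, hx, hxT⟩ := hsT
      exact ⟨⟨x, hAG x hx⟩, hx, hxT⟩
    · -- A smaller equivalent cut of `H` would lift to a smaller equivalent cut of `G`.
      intro C' S' T' h' hS' hT'
      by_contra! hlt
      obtain ⟨S₁, T₁, hG, hS₁, hT₁⟩ := hlift C' S' T' h' (by omega)
      have := hmin _ S₁ T₁ hG
        (htrace _ _ fun x hx => by
          have := Set.ext_iff.1 hS' x
          simp only [Set.mem_inter_iff, Set.mem_preimage] at this
          rw [hS₁]; tauto)
        (htrace _ _ fun x hx => by
          have := Set.ext_iff.1 hT' x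
          simp only [Set.mem_inter_iff, Set.mem_preimage] at this
          rw [hT₁]; tauto)
      rw [hncard] at this
      omega
  · rintro C S T ⟨-, -, hmin⟩ hC C' S' T' ⟨h', -, -⟩ hS' hT'
    by_contra! hlt
    obtain ⟨S₁, T₁, hG, hS₁, hT₁⟩ := hlift C' S' T' h' hlt
    have := hmin _ S₁ T₁ hG
      (htrace _ _ fun x hx => by rw [hS₁]; exact ((himg _ _).1 hS' x hx).symm)
      (htrace _ _ fun x hx => by rw [hT₁]; exact ((himg _ _).1 hT' x hx).symm)
    rw [hncard] at this
    omega
end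

section
/- Let G be a finite connected undirected graph in which no two distinct vertices are joined by three pairwise edge-disjoint paths (equivalently, every 3-edge-connected component of G is a single vertex). Then G is a cactus: every edge of G belongs to at most one simple cycle of G (where simple cycles are identified with their edge sets). -/
/-!
Suppose two cycles `c₁`, `c₂` share an edge, but some edge of `c₁` is not an edge of `c₂`. A maximal
stretch of `c₁` avoiding the edges of `c₂` then joins two vertices of `c₂`; they are distinct because
the stretch misses an edge of `c₁`, so it is a path (an *ear* of `c₂`). The ear and the two arcs into
which its ends split `c₂` are three pairwise edge-disjoint paths.

To find the ear, `c₁` is started at a vertex `u` of a shared edge, as an edge `uv` followed by a path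
`p` from `v` to `u`. If `uv` lies on `c₂`, then `p` is a path between vertices of `c₂` that has an
edge outside `c₂`, and `exists_ear_of_isPath` extracts an ear from it. Otherwise `uv` starts the ear,
and `exists_proper_prefix` continues it along `p` to the first edge on `c₂`, which comes before `p`
returns to `u`. The splitting of `c₂` is `threeEdgeDisjointPaths_of_ear`.
-/

/-- There exist three pairwise edge-disjoint paths between `a` and `b` in `G`. -/
def ThreeEdgeDisjointPaths {V : Type*} (G : SimpleGraph V) (a b : V) : Prop :=
  ∃ p q r : G.Walk a b, p.IsPath ∧ q.IsPath ∧ r.IsPath ∧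
    (∀ e ∈ p.edges, e ∉ q.edges) ∧ (∀ e ∈ p.edges, e ∉ r.edges) ∧
    (∀ e ∈ q.edges, e ∉ r.edges)

/-- A walk ending in `S` has an initial part that ends in `S` and uses no edge of `E`: stop at the
first edge of `E`, if there is one. -/
theorem exists_prefix {V : Type*} {G : SimpleGraph V} {S : Set V} {E : Set (Sym2 V)}
    (hE : ∀ x y, s(x, y) ∈ E → x ∈ S) {a v : V} (p : G.Walk a v) (hp : p.IsPath) (hv : v ∈ S) :
    ∃ y ∈ S, ∃ q : G.Walk a y, q.IsPath ∧ q.support ⊆ p.support ∧ ∀ e ∈ q.edges, e ∉ E := by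
  induction p with
  | nil => exact ⟨_, hv, .nil, by simp, by simp, by simp⟩
  | @cons a b v h p ih =>
    rw [SimpleGraph.Walk.cons_isPath_iff] at hp
    by_cases hh : s(a, b) ∈ E
    · exact ⟨a, hE _ _ hh, .nil, by simp, by simp, by simp⟩
    · obtain ⟨y, hy, q, hq, hs, hd⟩ := ih hp.1 hv
      refine ⟨y, hy, .cons h q, ?_, ?_, ?_⟩
      · rw [SimpleGraph.Walk.cons_isPath_iff]
        exact ⟨hq, fun hm => hp.2 (hs hm)⟩
      · simpa using List.Subset.trans hs (List.subset_cons_self _ _)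
      · simpa using ⟨hh, hd⟩

/-- If a path does use an edge of `E`, the part before the first such edge misses the endpoint. -/
theorem exists_proper_prefix {V : Type*} {G : SimpleGraph V} {S : Set V} {E : Set (Sym2 V)}
    (hE : ∀ x y, s(x, y) ∈ E → x ∈ S) {a v : V} (p : G.Walk a v) (hp : p.IsPath)
    (he : ∃ e ∈ p.edges, e ∈ E) :
    ∃ y ∈ S, ∃ q : G.Walk a y, q.IsPath ∧ q.support ⊆ p.support ∧ v ∉ q.support ∧
      ∀ e ∈ q.edges, e ∉ E := by
  induction p with
  | nil => simp at he
  | @cons a b v h p ih =>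
    rw [SimpleGraph.Walk.cons_isPath_iff] at hp
    have hav : v ≠ a := fun hva => hp.2 (hva ▸ p.end_mem_support)
    by_cases hh : s(a, b) ∈ E
    · exact ⟨a, hE _ _ hh, .nil, by simp, by simp, by simpa using hav, by simp⟩
    · obtain ⟨y, hy, q, hq, hs, hvq, hd⟩ := ih hp.1 (by
        obtain ⟨e, he, heE⟩ := he
        rw [SimpleGraph.Walk.edges_cons, List.mem_cons] at he
        rcases he with rfl | he
        · exact absurd heE hh
        · exact ⟨e, he, heE⟩)
      refine ⟨y, hy, .cons h q, ?_, ?_, ?_, ?_⟩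
      · rw [SimpleGraph.Walk.cons_isPath_iff]
        exact ⟨hq, fun hm => hp.2 (hs hm)⟩
      · simpa using List.Subset.trans hs (List.subset_cons_self _ _)
      · simpa using ⟨hav, hvq⟩
      · simpa using ⟨hh, hd⟩

/-- A path between vertices of `S` with an edge outside `E` contains an ear: start at its first edge
outside `E` and continue by `exists_prefix`. -/
theorem exists_ear_of_isPath {V : Type*} {G : SimpleGraph V} {S : Set V} {E : Set (Sym2 V)}
    (hE : ∀ x y, s(x, y) ∈ E → x ∈ S) {a v : V} (p : G.Walk a v) (hp : p.IsPath)
    (ha : a ∈ S) (hv : v ∈ S) (he : ∃ e ∈ p.edges, e ∉ E) :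
    ∃ x ∈ S, ∃ y ∈ S, x ≠ y ∧ ∃ q : G.Walk x y, q.IsPath ∧ ∀ e ∈ q.edges, e ∉ E := by
  induction p with
  | nil => simp at he
  | @cons a b v h p ih =>
    rw [SimpleGraph.Walk.cons_isPath_iff] at hp
    by_cases hh : s(a, b) ∈ E
    · refine ih hp.1 (hE b a (Sym2.eq_swap ▸ hh)) hv ?_
      obtain ⟨e, he, heE⟩ := he
      rw [SimpleGraph.Walk.edges_cons, List.mem_cons] at he
      rcases he with rfl | he
      · exact absurd hh heE
      · exact ⟨e, he, heE⟩
    · obtain ⟨y, hy, q, hq, hs, hd⟩ := exists_prefix hE p hp.1 hv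
      refine ⟨a, ha, y, hy, fun hay => hp.2 (hs (hay ▸ q.end_mem_support)), .cons h q, ?_, ?_⟩
      · rw [SimpleGraph.Walk.cons_isPath_iff]
        exact ⟨hq, fun hm => hp.2 (hs hm)⟩
      · simpa using ⟨hh, hd⟩

/-- An ear of a cycle, together with the two arcs of the cycle between its ends, gives three
edge-disjoint paths. -/
theorem threeEdgeDisjointPaths_of_ear {V : Type*} {G : SimpleGraph V} {b x y : V}
    (c : G.Walk b b) (hc : c.IsCycle) (hx : x ∈ c.support) (hy : y ∈ c.support)
    (q : G.Walk x y) (hq : q.IsPath) (hd : ∀ e ∈ q.edges, e ∉ c.edges) :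
    ThreeEdgeDisjointPaths G x y := by
  classical
  have hmem : ∀ e, e ∈ (c.rotate x hx).edges ↔ e ∈ c.edges := fun e =>
    (c.rotate_edges x hx).perm.mem_iff
  have hy' : y ∈ (c.rotate x hx).support := by
    rwa [SimpleGraph.Walk.mem_support_rotate_iff]
  have hnd := (hc.rotate hx).isTrail.edges_nodup
  generalize c.rotate x hx = d at *
  rw [← d.take_spec hy', SimpleGraph.Walk.edges_append, List.nodup_append] at hnd
  have h1 : ∀ e ∈ (d.takeUntil y hy').bypass.edges, e ∈ (d.takeUntil y hy').edges :=
    fun e he => SimpleGraph.Walk.edges_bypass_subset_edges _ he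
  have h2 : ∀ e ∈ (d.dropUntil y hy').reverse.bypass.edges, e ∈ (d.dropUntil y hy').edges :=
    fun e he => by
      simpa using SimpleGraph.Walk.edges_bypass_subset_edges _ he
  refine ⟨q, (d.takeUntil y hy').bypass, (d.dropUntil y hy').reverse.bypass, hq,
    SimpleGraph.Walk.bypass_isPath _, SimpleGraph.Walk.bypass_isPath _, ?_, ?_, ?_⟩
  · exact fun e he he' => hd e he ((hmem e).1 (d.edges_takeUntil_subset_edges hy' (h1 e he')))
  · exact fun e he he' => hd e he ((hmem e).1 (d.edges_dropUntil_subset_edges hy' (h2 e he')))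
  · exact fun e he he' => hnd.2.2 e (h1 e he) e (h2 e he') rfl

/-- If two cycles share an edge and no two vertices are joined by three edge-disjoint paths, each edge
of the first cycle lies on the second. -/
theorem edges_subset_of_shared_edge {V : Type*} (G : SimpleGraph V)
    (h3 : ∀ a b : V, a ≠ b → ¬ ThreeEdgeDisjointPaths G a b)
    {a b : V} (c₁ : G.Walk a a) (c₂ : G.Walk b b) (hc₁ : c₁.IsCycle) (hc₂ : c₂.IsCycle)
    (he : ∃ e, e ∈ c₁.edges ∧ e ∈ c₂.edges) : ∀ e, e ∈ c₁.edges → e ∈ c₂.edges := by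
  classical
  intro f hf₁
  by_contra hf₂
  have hE : ∀ x y, s(x, y) ∈ {e | e ∈ c₂.edges} → x ∈ {v | v ∈ c₂.support} :=
    fun x y h => c₂.fst_mem_support_of_mem_edges h
  suffices h : ∃ x ∈ {v | v ∈ c₂.support}, ∃ y ∈ {v | v ∈ c₂.support}, x ≠ y ∧
      ∃ q : G.Walk x y, q.IsPath ∧ ∀ e ∈ q.edges, e ∉ {e | e ∈ c₂.edges} by
    obtain ⟨x, hx, y, hy, hxy, q, hq, hd⟩ := h
    exact h3 x y hxy (threeEdgeDisjointPaths_of_ear c₂ hc₂ hx hy q hq hd)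
  obtain ⟨e, he₁, he₂⟩ := he
  induction e using Sym2.ind with
  | _ u w =>
  have hu₁ := c₁.fst_mem_support_of_mem_edges he₁
  have hu₂ := c₂.fst_mem_support_of_mem_edges he₂
  have hmem : ∀ e, e ∈ (c₁.rotate u hu₁).edges ↔ e ∈ c₁.edges := fun e =>
    (c₁.rotate_edges u hu₁).perm.mem_iff
  have hd := hc₁.rotate hu₁
  rw [← hmem] at hf₁ he₁
  generalize c₁.rotate u hu₁ = d at *
  cases d with
  | nil => simp at hf₁
  | @cons _ v _ h p =>
    rw [SimpleGraph.Walk.cons_isCycle_iff] at hd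
    rw [SimpleGraph.Walk.edges_cons, List.mem_cons] at hf₁ he₁
    by_cases hh : s(u, v) ∈ c₂.edges
    · refine exists_ear_of_isPath hE p hd.1 (c₂.snd_mem_support_of_mem_edges hh) hu₂ ⟨f, ?_, hf₂⟩
      exact hf₁.resolve_left fun hfe => hf₂ (hfe ▸ hh)
    · obtain ⟨y, hy, q, hq, -, huq, hqd⟩ := exists_proper_prefix hE p hd.1
        ⟨s(u, w), he₁.resolve_left fun hfe => hh (hfe ▸ he₂), he₂⟩
      refine ⟨u, hu₂, y, hy, fun huy => huq (huy ▸ q.end_mem_support), .cons h q, ?_, ?_⟩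
      · rw [SimpleGraph.Walk.cons_isPath_iff]
        exact ⟨hq, huq⟩
      · simpa using ⟨hh, hqd⟩

theorem stmt10 {V : Type*} [Fintype V] (G : SimpleGraph V)
    (hconn : G.Connected)
    (h3 : ∀ a b : V, a ≠ b → ¬ ThreeEdgeDisjointPaths G a b) :
    ∀ (a b : V) (c₁ : G.Walk a a) (c₂ : G.Walk b b),
      c₁.IsCycle → c₂.IsCycle →
      (∃ e, e ∈ c₁.edges ∧ e ∈ c₂.edges) →
      ∀ e, e ∈ c₁.edges ↔ e ∈ c₂.edges := by
  intro a b c₁ c₂ hc₁ hc₂ he f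
  exact ⟨edges_subset_of_shared_edge G h3 c₁ c₂ hc₁ hc₂ he f,
    edges_subset_of_shared_edge G h3 c₂ c₁ hc₂ hc₁ (he.imp fun _ h => h.symm) f⟩
end

section
/- Let G be a finite undirected graph and let a and b be two simple cycles of G with distinct edge sets that have at least two vertices in common. Then there exist two distinct vertices of G joined by three pairwise edge-disjoint paths in G. -/
open SimpleGraph in
/-- The two arcs of a cycle between two of its vertices. -/
theorem exists_split_cycle {V : Type*} {G : SimpleGraph V} {a u v : V} {c : G.Walk a a}
    (hc : c.IsCycle) (hu : u ∈ c.support) (hv : v ∈ c.support) (huv : u ≠ v) :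
    ∃ p q : G.Walk u v, p.IsPath ∧ q.IsPath ∧ (∀ e ∈ p.edges, e ∉ q.edges) ∧
      ∀ e, e ∈ c.edges ↔ e ∈ p.edges ∨ e ∈ q.edges := by
  classical
  have hd : (c.rotate u hu).IsCycle := hc.rotate hu
  have he : ∀ e, e ∈ c.edges ↔ e ∈ (c.rotate u hu).edges :=
    fun e => ((c.rotate_edges u hu).mem_iff).symm
  have hv' : v ∈ (c.rotate u hu).support := by
    rw [Walk.mem_support_rotate_iff]; exact hv
  generalize c.rotate u hu = d at hd he hv'
  have hspec := d.take_spec hv'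
  have hn := hd.support_nodup
  have hen := hd.edges_nodup
  have hp : (d.takeUntil v hv').IsPath := hd.isPath_takeUntil hv'
  generalize d.takeUntil v hv' = p at hspec hp
  generalize d.dropUntil v hv' = q at hspec
  subst hspec
  rw [Walk.tail_support_append, List.nodup_append] at hn
  rw [Walk.edges_append, List.nodup_append] at hen
  have hvp : v ∈ p.support.tail := by
    have h := p.end_mem_support
    rw [← p.cons_tail_support] at h
    rcases List.mem_cons.1 h with h | h
    · exact absurd h.symm huv
    · exact h
  have hq : q.IsPath := by
    rw [Walk.isPath_def, ← q.cons_tail_support, List.nodup_cons]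
    exact ⟨fun h => hn.2.2 v hvp v h rfl, hn.2.1⟩
  refine ⟨p, q.reverse, hp, hq.reverse, fun e h h' => ?_, fun e => ?_⟩
  · rw [Walk.edges_reverse, List.mem_reverse] at h'
    exact hen.2.2 e h e h' rfl
  · rw [he, Walk.edges_append, List.mem_append, Walk.edges_reverse, List.mem_reverse]

open SimpleGraph in
/-- The initial segment of a path up to its first vertex in `S` uses no edge of a set `F` of
edges with both ends in `S`. -/
theorem exists_path_first_hit {V : Type*} {G : SimpleGraph V} (S : Set V) (F : Set (Sym2 V))
    (hF : ∀ x y, s(x, y) ∈ F → x ∈ S) {w y : V} (p : G.Walk w y) (hp : p.IsPath) (hy : y ∈ S) :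
    ∃ v ∈ S, ∃ q : G.Walk w v, q.IsPath ∧ q.support ⊆ p.support ∧ ∀ e ∈ q.edges, e ∉ F := by
  induction p with
  | nil => exact ⟨_, hy, .nil, by simp, by simp, by simp⟩
  | @cons w w' y h p ih =>
    rw [Walk.cons_isPath_iff] at hp
    by_cases hw : w ∈ S
    · exact ⟨w, hw, .nil, by simp, by simp, by simp⟩
    · obtain ⟨v, hv, q, hq, hs, hqF⟩ := ih hp.1 hy
      refine ⟨v, hv, .cons h q, ?_, ?_, ?_⟩
      · exact (Walk.cons_isPath_iff _ _).2 ⟨hq, fun h' => hp.2 (hs h')⟩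
      · rw [Walk.support_cons, Walk.support_cons]
        exact List.cons_subset_cons _ hs
      · intro e he
        rw [Walk.edges_cons, List.mem_cons] at he
        rcases he with rfl | he
        · exact fun h' => hw (hF _ _ h')
        · exact hqF e he

open SimpleGraph in
/-- A path with both ends in `S` that uses an edge outside `F` contains a segment which joins
distinct vertices of `S` and avoids `F` altogether. -/
theorem exists_ear {V : Type*} {G : SimpleGraph V} (S : Set V) (F : Set (Sym2 V))
    (hF : ∀ x y, s(x, y) ∈ F → x ∈ S) {x y : V} (p : G.Walk x y) (hp : p.IsPath)
    (hx : x ∈ S) (hy : y ∈ S) (he : ∃ e ∈ p.edges, e ∉ F) :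
    ∃ u ∈ S, ∃ v ∈ S, u ≠ v ∧ ∃ q : G.Walk u v, q.IsPath ∧ ∀ e ∈ q.edges, e ∉ F := by
  induction p with
  | nil => simp at he
  | @cons x x' y h p ih =>
    rw [Walk.cons_isPath_iff] at hp
    by_cases hxF : s(x, x') ∈ F
    · obtain ⟨e, he, heF⟩ := he
      rw [Walk.edges_cons, List.mem_cons] at he
      rcases he with rfl | he
      · exact absurd hxF heF
      · exact ih hp.1 (hF x' x (Sym2.eq_swap ▸ hxF)) hy ⟨e, he, heF⟩
    · obtain ⟨v, hv, q, hq, hs, hqF⟩ := exists_path_first_hit S F hF p hp.1 hy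
      have hxq : x ∉ q.support := fun h' => hp.2 (hs h')
      refine ⟨x, hx, v, hv, ?_, .cons h q, (Walk.cons_isPath_iff _ _).2 ⟨hq, hxq⟩, ?_⟩
      · rintro rfl
        exact hxq q.end_mem_support
      · intro e he
        rw [Walk.edges_cons, List.mem_cons] at he
        rcases he with rfl | he
        · exact hxF
        · exact hqF e he

/-- The asymmetric case: some edge of `c'` is not an edge of `c`. -/
theorem three_paths_of_edge {V : Type*} (G : SimpleGraph V) {a b : V} {c : G.Walk a a}
    {c' : G.Walk b b} (hc : c.IsCycle) (hc' : c'.IsCycle)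
    (he : ∃ e ∈ c'.edges, e ∉ c.edges) {x y : V} (hxy : x ≠ y) (hx : x ∈ c.support)
    (hx' : x ∈ c'.support) (hy : y ∈ c.support) (hy' : y ∈ c'.support) :
    ∃ u v : V, u ≠ v ∧ ThreeEdgeDisjointPaths G u v := by
  obtain ⟨p, q, hp, hq, -, hpq⟩ := exists_split_cycle hc' hx' hy' hxy
  obtain ⟨e, hec', hec⟩ := he
  have key : ∃ r : G.Walk x y, r.IsPath ∧ e ∈ r.edges := by
    rcases (hpq e).1 hec' with h | h
    · exact ⟨p, hp, h⟩
    · exact ⟨q, hq, h⟩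
  obtain ⟨r, hr, her⟩ := key
  obtain ⟨u, hu, v, hv, huv, s, hs, hsc⟩ := exists_ear {z | z ∈ c.support} {e | e ∈ c.edges}
    (fun x y h => c.fst_mem_support_of_mem_edges h) r hr hx hy ⟨e, her, hec⟩
  obtain ⟨p', q', hp', hq', hd, hpq'⟩ := exists_split_cycle hc hu hv huv
  exact ⟨u, v, huv, p', q', s, hp', hq', hs, hd,
    fun e h h' => hsc e h' ((hpq' e).2 (.inl h)), fun e h h' => hsc e h' ((hpq' e).2 (.inr h))⟩

theorem stmt11 {V : Type*} [Fintype V] (G : SimpleGraph V)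
    (a b : V) (c₁ : G.Walk a a) (c₂ : G.Walk b b)
    (hc₁ : c₁.IsCycle) (hc₂ : c₂.IsCycle)
    (hdiff : ¬ (∀ e, e ∈ c₁.edges ↔ e ∈ c₂.edges))
    (hcommon : ∃ x y : V, x ≠ y ∧ x ∈ c₁.support ∧ x ∈ c₂.support ∧
      y ∈ c₁.support ∧ y ∈ c₂.support) :
    ∃ u v : V, u ≠ v ∧ ThreeEdgeDisjointPaths G u v := by
  obtain ⟨x, y, hxy, hx₁, hx₂, hy₁, hy₂⟩ := hcommon
  obtain ⟨e, he⟩ := not_forall.1 hdiff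
  by_cases h₁ : e ∈ c₁.edges
  · have h₂ : e ∉ c₂.edges := fun h => he (iff_of_true h₁ h)
    exact three_paths_of_edge G hc₂ hc₁ ⟨e, h₁, h₂⟩ hxy hx₂ hx₁ hy₂ hy₁
  · have h₂ : e ∈ c₂.edges := by
      by_contra h
      exact he (iff_of_false h₁ h)
    exact three_paths_of_edge G hc₁ hc₂ ⟨e, h₂, h₁⟩ hxy hx₁ hx₂ hy₁ hy₂
end

section
/- Let G be a finite biconnected graph (a connected graph on at least three vertices with no cut vertex) with active vertex set A_G. Let {u,v} be a split pair of G and let G' be a split component of {u,v} that is not a single edge and whose internal vertices (vertices other than u and v) are all inactive. Let H be defined as follows: if there exist three pairwise internally-vertex-disjoint paths between u and v in G, then H is obtained from G by deleting the internal vertices of G' together with all edges of G', and adding the edge {u,v}; otherwise, H is obtained from G by deleting the internal vertices of G' together with all edges of G', and adding a new inactive vertex x with the two edges {u,x} and {v,x}. Then, with active vertex set A_G and f the identity map on A_G, G and H are active-cut equivalent for 3-vertex connectivity via f. -/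
/-- `{u, v}` is a split pair of `G`: two distinct vertices that are adjacent or
whose removal disconnects `G`. -/
def IsSplitPair {V : Type*} (G : SimpleGraph V) (u v : V) : Prop :=
  u ≠ v ∧ (G.Adj u v ∨ ¬ (G.induce ({u, v}ᶜ : Set V)).Preconnected)

/-- `G'` is a (non-edge) split component of the split pair `{u, v}`: a maximal
connected subgraph of `G` containing `u` and `v` such that removing `{u, v}`
does not disconnect it. -/
def IsSplitComponent {V : Type*} (G : SimpleGraph V) (u v : V)
    (G' : G.Subgraph) : Prop :=
  (u ∈ G'.verts ∧ v ∈ G'.verts ∧ G'.coe.Connected ∧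
    ((G'.deleteVerts {u, v}).coe).Preconnected) ∧
  ∀ G'' : G.Subgraph, G' ≤ G'' →
    (u ∈ G''.verts ∧ v ∈ G''.verts ∧ G''.coe.Connected ∧
      ((G''.deleteVerts {u, v}).coe).Preconnected) → G'' = G'

/-- There exist three pairwise internally-vertex-disjoint paths between `u`
and `v` in `G`. -/
def ThreeInternallyDisjointPaths {V : Type*} (G : SimpleGraph V) (u v : V) : Prop :=
  ∃ p q r : G.Walk u v, p.IsPath ∧ q.IsPath ∧ r.IsPath ∧
    (∀ w ∈ p.support, w ∈ q.support → w = u ∨ w = v) ∧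
    (∀ w ∈ p.support, w ∈ r.support → w = u ∨ w = v) ∧
    (∀ w ∈ q.support, w ∈ r.support → w = u ∨ w = v)

/-! ### Reachability inside a vertex set -/

/-- The graph on the same vertices whose edges are the edges of `G` with both ends in `s`. -/
def restrTo {V : Type*} (G : SimpleGraph V) (s : Set V) : SimpleGraph V where
  Adj a b := G.Adj a b ∧ a ∈ s ∧ b ∈ s
  symm := ⟨fun _ _ h => ⟨h.1.symm, h.2.2, h.2.1⟩⟩
  loopless := ⟨fun _ h => G.loopless.irrefl _ h.1⟩

lemma restrTo_mono {V : Type*} (G : SimpleGraph V) {s t : Set V} (h : s ⊆ t) :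
    restrTo G s ≤ restrTo G t := fun _ _ hab => ⟨hab.1, h hab.2.1, h hab.2.2⟩

lemma exists_walk_of_restrTo {V : Type*} {G : SimpleGraph V} {s : Set V} {a b : V}
    (h : (restrTo G s).Reachable a b) (ha : a ∈ s) :
    ∃ p : G.Walk a b, ∀ w ∈ p.support, w ∈ s := by
  obtain ⟨p⟩ := h
  induction p with
  | nil => exact ⟨.nil, by simpa using ha⟩
  | cons hab _ ih =>
    obtain ⟨q, hq⟩ := ih hab.2.2
    refine ⟨.cons hab.1 q, ?_⟩
    simp only [SimpleGraph.Walk.support_cons, List.mem_cons]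
    rintro w (rfl | hw)
    exacts [ha, hq w hw]

/-- For a walk `p` starting in `M`, some walk with the same end and with vertices among those of
`p` starts in `M` and meets `M` in its first vertex only. -/
lemma exists_last_exit {V : Type*} {G : SimpleGraph V} (M : Set V) {a x : V} (p : G.Walk a x)
    (ha : a ∈ M) : ∃ z ∈ M, ∃ q : G.Walk z x,
      (∀ w ∈ q.support, w ∈ p.support) ∧ ∀ w ∈ q.support, w ∈ M → w = z := by
  classical
  by_contra hcon
  -- If each walk to `x` along `p` starting in `M` met `M` again later, then `p` would miss `M`.
  have key : ∀ {b c : V} (r : G.Walk b c), (∀ (z : V), z ∈ M → ∀ q : G.Walk z c,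
      (∀ w ∈ q.support, w ∈ r.support) → ∃ w ∈ q.support, w ∈ M ∧ w ≠ z) →
      ∀ w ∈ r.support, w ∉ M := by
    intro b c r
    induction r with
    | nil =>
      intro h w hw hwM
      simp only [SimpleGraph.Walk.support_nil, List.mem_singleton] at hw
      subst hw
      obtain ⟨w', h1, -, h2⟩ := h w hwM .nil (by simp)
      simp at h1; exact h2 h1
    | cons hab r ih =>
      intro h
      have ih' := ih (fun z hz q hq => h z hz q (fun w hw => by
        simp only [SimpleGraph.Walk.support_cons, List.mem_cons]; exact Or.inr (hq w hw)))
      intro w hw hwM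
      simp only [SimpleGraph.Walk.support_cons, List.mem_cons] at hw
      rcases hw with rfl | hw
      · obtain ⟨w', h1, h2, h3⟩ := h w hwM (.cons hab r) (fun _ h => h)
        simp only [SimpleGraph.Walk.support_cons, List.mem_cons] at h1
        exact h1.elim h3 (fun h1 => ih' w' h1 h2)
      · exact ih' w hw hwM
  refine key p ?_ a p.start_mem_support ha
  intro z hz q hq
  by_contra hc
  push Not at hc
  exact hcon ⟨z, hz, q, hq, hc⟩

/-- A walk between the two sides of a vertex cut meets the cut. -/
lemma walk_meets_cut {V : Type*} {G : SimpleGraph V} {C S T : Set V} (h : IsVertexCut G C S T)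
    {a b : V} (p : G.Walk a b) (ha : a ∈ S) (hb : b ∈ T) : ∃ w ∈ p.support, w ∈ C := by
  obtain ⟨-, -, hST, hU, -, -, hE⟩ := h
  induction p with
  | nil => exact absurd hb (Set.disjoint_left.1 hST ha)
  | @cons x y z hab r ih =>
    have hy : y ∈ C ∪ S ∪ T := hU ▸ Set.mem_univ y
    rcases hy with (hy | hy) | hy
    · exact ⟨y, by simp, hy⟩
    · obtain ⟨w, hw, hwC⟩ := ih hy hb
      exact ⟨w, by simp [hw], hwC⟩
    · exact absurd hab (hE _ ha _ hy)

/-! ### Two internally disjoint paths -/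

/-- Whitney's theorem for two paths, inside a vertex set `J` and with a fixed start `u`: if no
vertex `y ≠ u` of `J` separates `u` from another vertex of `J`, every vertex of `J` reachable from
`u` is joined to `u` by two internally disjoint paths. The two paths may coincide when
the vertices are adjacent. -/
lemma exists_two_paths {V : Type*} {G : SimpleGraph V} {J : Set V} {u : V} (hu : u ∈ J)
    (hJ : ∀ y ∈ J, y ≠ u → ∀ x ∈ J, x ≠ y → (restrTo G (J \ {y})).Reachable u x)
    {x : V} (hx : (restrTo G J).Reachable u x) :
    ∃ p q : G.Walk u x, p.IsPath ∧ q.IsPath ∧ (∀ w ∈ p.support, w ∈ J) ∧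
      (∀ w ∈ q.support, w ∈ J) ∧ ∀ w ∈ p.support, w ∈ q.support → w = u ∨ w = x := by
  classical
  rw [SimpleGraph.reachable_iff_reflTransGen] at hx
  induction hx with
  | refl => exact ⟨.nil, .nil, by simp, by simp, by simpa using hu, by simpa using hu, by simp⟩
  | @tail y x _ hyx ih =>
    obtain ⟨hadj, hyJ, hxJ⟩ := hyx
    by_cases hyu : y = u
    · subst hyu
      refine ⟨hadj.toWalk, hadj.toWalk, ?_, ?_, ?_, ?_, ?_⟩ <;>
        simp [SimpleGraph.Adj.toWalk, hadj.ne, hyJ, hxJ]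
    -- It suffices to find two walks with the required supports.
    suffices h : ∃ p q : G.Walk u x, (∀ w ∈ p.support, w ∈ J) ∧
        (∀ w ∈ q.support, w ∈ J) ∧ ∀ w ∈ p.support, w ∈ q.support → w = u ∨ w = x by
      obtain ⟨p, q, hp, hq, hpq⟩ := h
      have hp' := p.support_bypass_subset_support
      have hq' := q.support_bypass_subset_support
      exact ⟨p.bypass, q.bypass, p.bypass_isPath, q.bypass_isPath,
        fun w hw => hp w (hp' hw), fun w hw => hq w (hq' hw),
        fun w h1 h2 => hpq w (hp' h1) (hq' h2)⟩
    -- Reroute: for a vertex `z ≠ y` of `P` and a walk `R` from `z` to `x` avoiding `y` and meeting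
    -- `Q` at most in `z`, follow `P` up to `z`, then `R`; the other walk is `Q` and the edge `yx`.
    have step : ∀ (P Q : G.Walk u y), P.IsPath → (∀ w ∈ P.support, w ∈ J) →
        (∀ w ∈ Q.support, w ∈ J) → (∀ w ∈ P.support, w ∈ Q.support → w = u ∨ w = y) →
        ∀ z, z ∈ P.support → z ≠ y → ∀ R : G.Walk z x, (∀ w ∈ R.support, w ∈ J \ {y}) →
        (∀ w ∈ R.support, w ∈ Q.support → w = z) →
        ∃ p q : G.Walk u x, (∀ w ∈ p.support, w ∈ J) ∧
        (∀ w ∈ q.support, w ∈ J) ∧ ∀ w ∈ p.support, w ∈ q.support → w = u ∨ w = x := by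
      intro P Q hP hPJ hQJ hPQ z hz hzy R hRJ hRQ
      have hsub := P.support_takeUntil_subset_support hz
      have hyn := SimpleGraph.Walk.endpoint_notMem_support_takeUntil hP hz (Ne.symm hzy)
      refine ⟨(P.takeUntil z hz).append R, Q.concat hadj, ?_, ?_, ?_⟩
      · intro w hw
        rw [SimpleGraph.Walk.mem_support_append_iff] at hw
        rcases hw with hw | hw
        exacts [hPJ w (hsub hw), (hRJ w hw).1]
      · intro w hw
        simp only [SimpleGraph.Walk.support_concat, List.mem_append,
          List.mem_singleton] at hw
        rcases hw with hw | rfl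
        exacts [hQJ w hw, hxJ]
      · intro w hw hw'
        rw [SimpleGraph.Walk.mem_support_append_iff] at hw
        simp only [SimpleGraph.Walk.support_concat, List.mem_append,
          List.mem_singleton] at hw'
        rcases hw' with hw' | hw'
        · rcases hw with hw | hw
          · rcases hPQ w (hsub hw) hw' with h | h
            · exact Or.inl h
            · exact absurd (h ▸ hw) hyn
          · have hwz := hRQ w hw hw'
            subst hwz
            exact (hPQ w hz hw').imp_right (fun h => absurd h hzy)
        · exact Or.inr hw'
    obtain ⟨P, Q, hP, hQ, hPJ, hQJ, hPQ⟩ := ih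
    obtain ⟨R₀, hR₀⟩ := exists_walk_of_restrTo (hJ y hyJ hyu x hxJ hadj.ne')
      ⟨hu, fun h => hyu h.symm⟩
    obtain ⟨z, hzM, R, hR, hRM⟩ := exists_last_exit {w | w ∈ P.support ∨ w ∈ Q.support} R₀
      (Or.inl P.start_mem_support)
    have hRJ : ∀ w ∈ R.support, w ∈ J \ {y} := fun w hw => hR₀ w (hR w hw)
    have hzy : z ≠ y := (hRJ z R.start_mem_support).2
    rcases hzM with hz | hz
    · exact step P Q hP hPJ hQJ hPQ z hz hzy R hRJ (fun w h1 h2 => hRM w h1 (Or.inr h2))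
    · exact step Q P hQ hQJ hPJ (fun w h1 h2 => hPQ w h2 h1) z hz hzy R hRJ
        (fun w h1 h2 => hRM w h1 (Or.inl h2))

/-! ### The interior of a split component -/

/-- What the proof uses about the interior `I` of a split component of `{u, v}` that is not an
edge: `I` is the vertex set of a connected component of `G - {u, v}`. Connectedness is encoded by
sets closed under adjacency. -/
structure IsPiece {V : Type*} (G : SimpleGraph V) (I : Set V) (u v : V) : Prop where
  ne : u ≠ v
  left : u ∉ I
  right : v ∉ I
  nonempty : I.Nonempty
  closed : ∀ a ∈ I, ∀ b, G.Adj a b → b ∈ I ∨ b = u ∨ b = v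
  conn : ∀ X : Set V, (∃ x ∈ I, x ∈ X) → (∀ a ∈ I, a ∈ X → ∀ b ∈ I, G.Adj a b → b ∈ X) → I ⊆ X

lemma IsPiece.swap {V : Type*} {G : SimpleGraph V} {I : Set V} {u v : V} (h : IsPiece G I u v) :
    IsPiece G I v u :=
  ⟨h.ne.symm, h.right, h.left, h.nonempty, fun a ha b hb => (h.closed a ha b hb).imp_right Or.symm,
    h.conn⟩

/-- In a preconnected induced subgraph, a nonempty set closed under adjacency is everything. -/
lemma mem_of_preconnected {V : Type*} {G : SimpleGraph V} {s : Set V}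
    (h : (G.induce s).Preconnected) (X : Set V) {x : V} (hxX : x ∈ X) (hxs : x ∈ s)
    (hX : ∀ a ∈ X, a ∈ s → ∀ b ∈ s, G.Adj a b → b ∈ X) {b : V} (hb : b ∈ s) : b ∈ X := by
  have hr := h ⟨x, hxs⟩ ⟨b, hb⟩
  rw [SimpleGraph.reachable_iff_reflTransGen] at hr
  have key : ∀ y : s, Relation.ReflTransGen (G.induce s).Adj ⟨x, hxs⟩ y → y.1 ∈ X := by
    intro y hy
    induction hy with
    | refl => exact hxX
    | @tail y z _ hyz ih => exact hX _ ih y.2 _ z.2 hyz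
  exact key _ hr

section Piece

variable {V : Type*} {G : SimpleGraph V} {I : Set V} {u v : V}

lemma IsPiece.exists_adj_left (h : IsPiece G I u v)
    (hnocut : ∀ w : V, (G.induce ({w}ᶜ : Set V)).Preconnected) : ∃ a ∈ I, G.Adj u a := by
  by_contra hcon
  push Not at hcon
  obtain ⟨x, hx⟩ := h.nonempty
  refine h.left (mem_of_preconnected (hnocut v) I hx (fun hxv => h.right (hxv ▸ hx)) ?_ h.ne)
  intro a ha _ b hb hab
  rcases h.closed a ha b hab with h1 | rfl | rfl
  · exact h1
  · exact absurd hab.symm (hcon a ha)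
  · exact absurd rfl hb

/-- Any walk out of `I` passes through `u` or `v`, so a walk from `o` to `u` in the connected graph
`G - v` can enter `I` only after reaching `u`. -/
lemma IsPiece.reachable_outside_left (h : IsPiece G I u v)
    (hnocut : ∀ w : V, (G.induce ({w}ᶜ : Set V)).Preconnected) {o : V} (hoI : o ∉ I)
    (hov : o ≠ v) : (restrTo G Iᶜ).Reachable o u := by
  by_contra hcon
  have := mem_of_preconnected (hnocut v) {x | x ∉ I ∧ (restrTo G Iᶜ).Reachable o x}
    (x := o) ⟨hoI, .rfl⟩ hov ?_ (b := u) h.ne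
  · exact hcon this.2
  rintro a ⟨haI, ha⟩ hav b hb hab
  have hbI : b ∉ I := by
    intro hbI
    rcases h.closed b hbI a hab.symm with h1 | rfl | rfl
    · exact haI h1
    · exact hcon ha
    · exact hav rfl
  have : (restrTo G Iᶜ).Adj a b := ⟨hab, haI, hbI⟩
  exact ⟨hbI, ha.trans this.reachable⟩

lemma IsPiece.exists_outside_walk (h : IsPiece G I u v)
    (hnocut : ∀ w : V, (G.induce ({w}ᶜ : Set V)).Preconnected) {o : V} (hoI : o ∉ I)
    (hou : o ≠ u) (hov : o ≠ v) : ∃ p : G.Walk u v, ∀ w ∈ p.support, w ∉ I :=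
  exists_walk_of_restrTo
    ((h.reachable_outside_left hnocut hoI hov).symm.trans
      (h.swap.reachable_outside_left hnocut hoI hou)) h.left

/-- If no single vertex of `I` separates `u` from `v` inside `I ∪ {u, v}`, there are two internally
disjoint `u`-`v` paths through `I`, and a path outside `I` is a third one. -/
lemma IsPiece.exists_separator (h : IsPiece G I u v)
    (hnocut : ∀ w : V, (G.induce ({w}ᶜ : Set V)).Preconnected)
    (hthree : ¬ ThreeInternallyDisjointPaths G u v)
    {o : V} (hoI : o ∉ I) (hou : o ≠ u) (hov : o ≠ v) :
    ∃ a ∈ I, ¬ (restrTo G ((I ∪ {u, v}) \ {a})).Reachable u v := by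
  classical
  by_contra! hcon
  refine hthree ?_
  have huJ : u ∈ I ∪ {u, v} := by simp
  have hvJ : v ∈ I ∪ {u, v} := by simp
  have hJ : ∀ y ∈ I ∪ {u, v}, y ≠ u → ∀ x ∈ I ∪ {u, v}, x ≠ y →
      (restrTo G ((I ∪ {u, v}) \ {y})).Reachable u x := by
    intro y hy hyu x hx hxy
    by_contra hux
    have hv : v = y ∨ (restrTo G ((I ∪ {u, v}) \ {y})).Reachable u v := by
      rcases hy with hy | rfl | rfl
      · exact Or.inr (hcon y hy)
      · exact absurd rfl hyu
      · exact Or.inl rfl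
    -- The vertices of `I` cut off from `u` by `y` would form a component of `G - y`.
    have := mem_of_preconnected (hnocut y)
      {z | z ∈ I ∧ ¬ (restrTo G ((I ∪ {u, v}) \ {y})).Reachable u z} (x := x) ?_ hxy ?_
      (b := u) (Ne.symm hyu)
    · exact h.left this.1
    · refine ⟨?_, hux⟩
      rcases hx with hx | rfl | rfl
      · exact hx
      · exact absurd .rfl hux
      · exact (hv.elim hxy hux).elim
    · rintro a ⟨haI, ha⟩ hay b hby hab
      have hbJ : b ∈ I ∪ {u, v} := h.closed a haI b hab
      have hadj : (restrTo G ((I ∪ {u, v}) \ {y})).Adj b a :=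
        ⟨hab.symm, ⟨hbJ, hby⟩, ⟨Or.inl haI, hay⟩⟩
      have hb : ¬ (restrTo G ((I ∪ {u, v}) \ {y})).Reachable u b :=
        fun hb => ha (hb.trans hadj.reachable)
      refine ⟨?_, hb⟩
      rcases hbJ with hbJ | rfl | rfl
      · exact hbJ
      · exact absurd .rfl hb
      · exact (hv.elim (fun h => hby h) hb).elim
  obtain ⟨x, hx⟩ := h.nonempty
  have huv := (hcon x hx).mono (restrTo_mono G (Set.sdiff_subset))
  obtain ⟨p, q, hp, hq, hpJ, hqJ, hpq⟩ := exists_two_paths huJ hJ huv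
  obtain ⟨r, hr⟩ := h.exists_outside_walk hnocut hoI hou hov
  have hr' := r.support_bypass_subset_support
  exact ⟨p, q, r.bypass, hp, hq, r.bypass_isPath, hpq,
    fun w h1 h2 => (hpJ w h1).resolve_left (hr w (hr' h2)),
    fun w h1 h2 => (hqJ w h1).resolve_left (hr w (hr' h2))⟩

/-- A vertex cut of `G - I` with no end of `{u, v}` in `T` extends to `G` by putting `I` in `S`. -/
lemma IsPiece.cut_union (h : IsPiece G I u v) {C S T : Set V}
    (hCS : Disjoint C S) (hCT : Disjoint C T) (hST : Disjoint S T) (hU : C ∪ S ∪ T = Iᶜ)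
    (hS : S.Nonempty) (hT : T.Nonempty) (hE : ∀ a ∈ S, ∀ b ∈ T, ¬ G.Adj a b)
    (hu : u ∉ T) (hv : v ∉ T) : IsVertexCut G C (S ∪ I) T := by
  have hCI : ∀ x, x ∈ C → x ∉ I := fun x hx => hU.subset (Or.inl (Or.inl hx))
  have hTI : ∀ x, x ∈ T → x ∉ I := fun x hx => hU.subset (Or.inr hx)
  refine ⟨?_, hCT, ?_, ?_, hS.mono Set.subset_union_left, hT, ?_⟩
  · exact Set.disjoint_union_right.2 ⟨hCS, Set.disjoint_left.2 hCI⟩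
  · exact Set.disjoint_union_left.2 ⟨hST, Set.disjoint_right.2 hTI⟩
  · rw [show C ∪ (S ∪ I) ∪ T = (C ∪ S ∪ T) ∪ I by ac_rfl, hU, Set.compl_union_self]
  · rintro a (ha | ha) b hb hab
    · exact hE a ha b hb hab
    · rcases h.closed a ha b hab with h1 | rfl | rfl
      exacts [hTI b hb h1, hu hb, hv hb]

/-- A vertex cut of `G - I` with `u` and `v` on opposite sides extends to `G` by adding to `C` a
vertex of `I` that separates `u` from `v` inside `I ∪ {u, v}`. -/
lemma IsPiece.cut_insert (h : IsPiece G I u v) {C S T : Set V}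
    (hCS : Disjoint C S) (hCT : Disjoint C T) (hST : Disjoint S T) (hU : C ∪ S ∪ T = Iᶜ)
    (hE : ∀ a ∈ S, ∀ b ∈ T, ¬ G.Adj a b) (hu : u ∈ S) (hv : v ∈ T)
    {a : V} (ha : a ∈ I) (hsep : ¬ (restrTo G ((I ∪ {u, v}) \ {a})).Reachable u v) :
    ∃ S' T', IsVertexCut G (insert a C) S' T' ∧ (∀ x, x ∉ I → (x ∈ S' ↔ x ∈ S)) ∧
      (∀ x, x ∉ I → (x ∈ T' ↔ x ∈ T)) := by
  set R : Set V := {x | (restrTo G ((I ∪ {u, v}) \ {a})).Reachable u x} with hR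
  have huR : u ∈ R := SimpleGraph.Reachable.rfl
  have hvR : v ∉ R := hsep
  have hstep : ∀ x y, x ∈ R → G.Adj x y → x ∈ I ∪ {u, v} → y ∈ I ∪ {u, v} → x ≠ a → y ≠ a →
      y ∈ R := by
    intro x y hx hxy hxJ hyJ hxa hya
    have : (restrTo G ((I ∪ {u, v}) \ {a})).Adj x y := ⟨hxy, ⟨hxJ, hxa⟩, ⟨hyJ, hya⟩⟩
    exact SimpleGraph.Reachable.trans hx this.reachable
  have hmem : ∀ x, x ∉ I ↔ (x ∈ C ∨ x ∈ S) ∨ x ∈ T := fun x => by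
    rw [← Set.mem_compl_iff, ← hU]; rfl
  rw [Set.disjoint_left] at hCS hCT hST
  have hcl := h.closed
  have hul := h.left
  have hvl := h.right
  refine ⟨S ∪ {x | x ∈ I ∧ x ≠ a ∧ x ∈ R}, T ∪ {x | x ∈ I ∧ x ≠ a ∧ x ∉ R},
    ⟨?_, ?_, ?_, ?_, ⟨u, Or.inl hu⟩, ⟨v, Or.inl hv⟩, ?_⟩, ?_, ?_⟩
  · rw [Set.disjoint_left]; intro x; simp only [Set.mem_insert_iff, Set.mem_union, Set.mem_ofPred_eq]
    grind
  · rw [Set.disjoint_left]; intro x; simp only [Set.mem_insert_iff, Set.mem_union, Set.mem_ofPred_eq]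
    grind
  · rw [Set.disjoint_left]; intro x; simp only [Set.mem_union, Set.mem_ofPred_eq]
    grind
  · ext x; simp only [Set.mem_insert_iff, Set.mem_union, Set.mem_ofPred_eq, Set.mem_univ, iff_true]
    grind
  · rintro x (hx | ⟨hxI, hxa, hxR⟩) y (hy | ⟨hyI, hya, hyR⟩) hxy
    · exact hE x hx y hy hxy
    · rcases hcl y hyI x hxy.symm with h1 | rfl | rfl
      · exact ((hmem x).2 (by tauto)) h1
      · exact hyR (hstep _ _ huR hxy (by simp) (Or.inl hyI) (fun h => hul (h ▸ ha)) hya)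
      · exact hST hx hv
    · rcases hcl x hxI y hxy with h1 | rfl | rfl
      · exact ((hmem y).2 (by tauto)) h1
      · exact hST hu hy
      · exact hvR (hstep _ _ hxR hxy (Or.inl hxI) (by simp) hxa (fun h => hvl (h ▸ ha)))
    · exact hyR (hstep _ _ hxR hxy (Or.inl hxI) (Or.inl hyI) hxa hya)
  · intro x hx; simp [hx]
  · intro x hx; simp [hx]

end Piece

lemma IsVertexCut.swap {V : Type*} {G : SimpleGraph V} {C S T : Set V} (h : IsVertexCut G C S T) :
    IsVertexCut G C T S := by
  obtain ⟨h1, h2, h3, h4, h5, h6, h7⟩ := h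
  exact ⟨h2, h1, h3.symm, by rw [← h4, Set.union_right_comm], h6, h5,
    fun a ha b hb hab => h7 b hb a ha hab.symm⟩

/-! ### Split components as pieces -/

/-- By maximality, a split component contains every edge of `G` that can be added to it without
disconnecting it when `{u, v}` is removed. -/
lemma IsSplitComponent.adj_of_adj {V : Type*} {G : SimpleGraph V} {u v : V} {G' : G.Subgraph}
    (h : IsSplitComponent G u v G') (hne : (G'.verts \ {u, v}).Nonempty) {a b : V}
    (hab : G.Adj a b) (ha : a ∈ G'.verts)
    (hb : b ∈ G'.verts ∨ (a ∉ ({u, v} : Set V) ∧ b ∉ ({u, v} : Set V))) : G'.Adj a b := by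
  obtain ⟨⟨hu, hv, hc, hd⟩, hmax⟩ := h
  have hS := SimpleGraph.Subgraph.subgraphOfAdj_connected hab
  have hD : (G'.deleteVerts {u, v}).Connected :=
    SimpleGraph.Subgraph.connected_iff.2 ⟨SimpleGraph.Subgraph.preconnected_iff.2 hd, hne⟩
  have hle : G' ≤ G' ⊔ G.subgraphOfAdj hab := le_sup_left
  have heq := hmax (G' ⊔ G.subgraphOfAdj hab) hle ⟨Or.inl hu, Or.inl hv, ?_, ?_⟩
  · rw [← heq]
    exact Or.inr rfl
  · exact (SimpleGraph.Subgraph.connected_sup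
      (SimpleGraph.Subgraph.preconnected_iff.2 hc.preconnected) hS.preconnected
      ⟨a, ha, by simp⟩).coe
  · rw [← SimpleGraph.Subgraph.preconnected_iff]
    refine SimpleGraph.Subgraph.Connected.preconnected ?_
    have hle' := SimpleGraph.Subgraph.deleteVerts_mono (s := {u, v}) hle
    rcases hb with hb | ⟨ha', hb'⟩
    · refine hD.mono hle' ?_
      ext x
      simp only [SimpleGraph.Subgraph.deleteVerts_verts, SimpleGraph.Subgraph.verts_sup,
        SimpleGraph.subgraphOfAdj_verts, Set.mem_sdiff, Set.mem_union, Set.mem_insert_iff,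
        Set.mem_singleton_iff]
      grind
    · have hDS := SimpleGraph.Subgraph.connected_sup hD.preconnected hS.preconnected
        ⟨a, ⟨ha, ha'⟩, by simp⟩
      refine hDS.mono (sup_le hle' ⟨?_, ?_⟩) ?_
      · intro x hx
        refine ⟨Or.inr hx, ?_⟩
        rcases hx with rfl | rfl
        exacts [ha', hb']
      · intro x y hxy
        rw [SimpleGraph.Subgraph.deleteVerts_adj]
        have hxy' := hxy
        simp only [SimpleGraph.subgraphOfAdj_adj, Sym2.eq, Sym2.rel_iff'] at hxy'
        refine ⟨Or.inr hxy.fst_mem, ?_, Or.inr hxy.snd_mem, ?_, Or.inr hxy⟩ <;> grind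
      · ext x
        simp only [SimpleGraph.Subgraph.deleteVerts_verts, SimpleGraph.Subgraph.verts_sup,
          SimpleGraph.subgraphOfAdj_verts, Set.mem_sdiff, Set.mem_union, Set.mem_insert_iff,
          Set.mem_singleton_iff] at ha' hb' ⊢
        grind

lemma IsSplitComponent.isPiece {V : Type*} {G : SimpleGraph V} {u v : V} {G' : G.Subgraph}
    (h : IsSplitComponent G u v G') (huv : u ≠ v) (hne : (G'.verts \ {u, v}).Nonempty) :
    IsPiece G (G'.verts \ {u, v}) u v := by
  refine ⟨huv, by simp, by simp, hne, ?_, ?_⟩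
  · intro a ha b hab
    by_contra hcon
    push Not at hcon
    obtain ⟨hb, hbu, hbv⟩ := hcon
    have hb' : b ∉ ({u, v} : Set V) := by simp [hbu, hbv]
    exact hb ⟨(h.adj_of_adj hne hab ha.1 (Or.inr ⟨ha.2, hb'⟩)).snd_mem, hb'⟩
  · rintro X ⟨x, hxI, hxX⟩ hX b hb
    have hr := h.1.2.2.2 ⟨x, hxI⟩ ⟨b, hb⟩
    rw [SimpleGraph.reachable_iff_reflTransGen] at hr
    have key : ∀ y, Relation.ReflTransGen (G'.deleteVerts {u, v}).coe.Adj ⟨x, hxI⟩ y →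
        y.1 ∈ X := by
      intro y hy
      induction hy with
      | refl => exact hxX
      | @tail y z _ hyz ih => exact hX _ y.2 ih _ z.2 (SimpleGraph.Subgraph.coe_adj_sub _ _ _ hyz)
    exact key _ hr

/-! ### Transferring cuts between the two graphs -/

/-- Active-cut equivalence follows once cuts of `G` of size `< l` have equivalent cuts of `H` that
are no larger, and all cuts of `H` have equivalent cuts of `G` that are no larger. -/
lemma activeCutEquiv_of_transfer {V W : Type*} {G : SimpleGraph V} {H : SimpleGraph W}
    {AG : Set V} {AH : Set W} {f : V → W} {l : ℕ}
    (hmaps : Set.MapsTo f AG AH) (hsurj : Set.SurjOn f AG AH) (hinj : Set.InjOn f AG)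
    (down : ∀ C S T, IsVertexCut G C S T → SeparatesV S T AG → C.ncard < l →
      ∃ C' S' T', IsVertexCut H C' S' T' ∧ C'.ncard ≤ C.ncard ∧
        f '' (AG ∩ S) = AH ∩ S' ∧ f '' (AG ∩ T) = AH ∩ T')
    (up : ∀ C' S' T', IsVertexCut H C' S' T' → SeparatesV S' T' AH →
      ∃ C S T, IsVertexCut G C S T ∧ C.ncard ≤ C'.ncard ∧
        f '' (AG ∩ S) = AH ∩ S' ∧ f '' (AG ∩ T) = AH ∩ T') :
    ActiveCutEquivVertex G H AG AH f l := by
  have inj : ∀ {X Y : Set V}, f '' (AG ∩ X) = f '' (AG ∩ Y) → AG ∩ X = AG ∩ Y :=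
    fun h => (hinj.image_eq_image_iff Set.inter_subset_left Set.inter_subset_left).1 h
  -- A minimal cut of `G` is no larger than any equivalent cut of `H`.
  have key : ∀ C S T, IsMinSepVertexCut G AG C S T → ∀ C' S' T', IsVertexCut H C' S' T' →
      f '' (AG ∩ S) = AH ∩ S' → f '' (AG ∩ T) = AH ∩ T' → C.ncard ≤ C'.ncard := by
    intro C S T ⟨_, hsep, hmin⟩ C' S' T' hcut hS hT
    obtain ⟨C₁, S₁, T₁, h1, h2, h3, h4⟩ := up C' S' T' hcut
      ⟨hS ▸ hsep.1.image f, hT ▸ hsep.2.image f⟩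
    exact (hmin C₁ S₁ T₁ h1 (inj (h3.trans hS.symm)) (inj (h4.trans hT.symm))).trans h2
  refine ⟨hmaps, hsurj, ?_, ?_⟩
  · intro C S T hm hl
    obtain ⟨C', S', T', h1, h2, h3, h4⟩ := down C S T hm.1 hm.2.1 hl
    refine ⟨C', S', T', ⟨h1, ⟨h3 ▸ hm.2.1.1.image f, h4 ▸ hm.2.1.2.image f⟩, ?_⟩,
      le_antisymm h2 (key C S T hm C' S' T' h1 h3 h4), h3, h4⟩
    intro C'' S'' T'' hcut hS hT
    exact h2.trans (key C S T hm C'' S'' T'' hcut (h3.trans hS.symm) (h4.trans hT.symm))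
  · intro C S T hm hl C' S' T' hm' hS hT
    exact hl.trans (key C S T hm C' S' T' hm'.1 hS hT)

/-- A cut with `u` and `v` on opposite sides meets each of three internally disjoint paths in
different vertices. -/
lemma three_le_ncard_of_paths {V : Type*} [Finite V] {G : SimpleGraph V} {u v : V}
    (h : ThreeInternallyDisjointPaths G u v) {C S T : Set V} (hc : IsVertexCut G C S T)
    (hu : u ∈ S) (hv : v ∈ T) : 3 ≤ C.ncard := by
  obtain ⟨p, q, r, -, -, -, hpq, hpr, hqr⟩ := h
  obtain ⟨a, hap, haC⟩ := walk_meets_cut hc p hu hv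
  obtain ⟨b, hbq, hbC⟩ := walk_meets_cut hc q hu hv
  obtain ⟨c, hcr, hcC⟩ := walk_meets_cut hc r hu hv
  have hC : ∀ w ∈ C, ¬ (w = u ∨ w = v) := by
    rintro w hw (rfl | rfl)
    exacts [Set.disjoint_left.1 hc.1 hw hu, Set.disjoint_left.1 hc.2.1 hw hv]
  refine (Set.two_lt_ncard_iff (Set.toFinite C)).2 ⟨a, b, c, haC, hbC, hcC, ?_, ?_, ?_⟩
  · rintro rfl; exact hC _ haC (hpq _ hap hbq)
  · rintro rfl; exact hC _ haC (hpr _ hap hcr)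
  · rintro rfl; exact hC _ hbC (hqr _ hbq hcr)

lemma exists_some_eq_and {α : Type*} {P : α → Prop} {a : α} :
    (∃ w, some a = some w ∧ P w) ↔ P a := by simp

lemma forall_some_eq_imp {α : Type*} {P : α → Prop} {a : α} :
    (∀ w, some a = some w → P w) ↔ P a := by simp

section Transfer

variable {V W : Type*} {G : SimpleGraph V} {I : Set V} {u v : V} {H : SimpleGraph W}

/-- A cut of `H` restricts to a partition of `G - I` without crossing edges, when `e` embeds
`G - I` into `H`. -/
lemma restrict_cut {e : ↥(Iᶜ : Set V) → W}
    (he : ∀ x y : ↥(Iᶜ : Set V), G.Adj x y → H.Adj (e x) (e y)) {C S T : Set W}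
    (hc : IsVertexCut H C S T) :
    Disjoint (Subtype.val '' (e ⁻¹' C)) (Subtype.val '' (e ⁻¹' S)) ∧
    Disjoint (Subtype.val '' (e ⁻¹' C)) (Subtype.val '' (e ⁻¹' T)) ∧
    Disjoint (Subtype.val '' (e ⁻¹' S)) (Subtype.val '' (e ⁻¹' T)) ∧
    Subtype.val '' (e ⁻¹' C) ∪ Subtype.val '' (e ⁻¹' S) ∪ Subtype.val '' (e ⁻¹' T) = Iᶜ ∧
    ∀ a ∈ Subtype.val '' (e ⁻¹' S), ∀ b ∈ Subtype.val '' (e ⁻¹' T), ¬ G.Adj a b := by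
  obtain ⟨h1, h2, h3, h4, -, -, h7⟩ := hc
  have hinj : Function.Injective (Subtype.val : ↥(Iᶜ : Set V) → V) := Subtype.val_injective
  refine ⟨(Set.disjoint_image_iff hinj).2 (h1.preimage e),
    (Set.disjoint_image_iff hinj).2 (h2.preimage e),
    (Set.disjoint_image_iff hinj).2 (h3.preimage e), ?_, ?_⟩
  · rw [← Set.image_union, ← Set.image_union, ← Set.preimage_union, ← Set.preimage_union, h4,
      Set.preimage_univ, Set.image_univ, Subtype.range_coe]
  · rintro _ ⟨a, ha, rfl⟩ _ ⟨b, hb, rfl⟩ hab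
    exact h7 _ ha _ hb (he a b hab)

lemma ncard_restrict_le [Finite W] {e : ↥(Iᶜ : Set V) → W} (hinj : Function.Injective e)
    {C D : Set W} (hCD : ∀ w, e w ∈ C → e w ∈ D) :
    (Subtype.val '' (e ⁻¹' C)).ncard ≤ D.ncard := by
  rw [Set.ncard_image_of_injective _ Subtype.val_injective,
    ← Set.ncard_image_of_injective _ hinj]
  refine Set.ncard_le_ncard ?_ (Set.toFinite D)
  rintro _ ⟨w, hw, rfl⟩
  exact hCD w hw

lemma IsPiece.lift_same_side [Finite W] (h : IsPiece G I u v) {e : ↥(Iᶜ : Set V) → W}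
    (hinj : Function.Injective e)
    (he : ∀ x y : ↥(Iᶜ : Set V), G.Adj x y → H.Adj (e x) (e y)) {C S T : Set W}
    (hc : IsVertexCut H C S T) (hS : ∃ w, e w ∈ S) (hT : ∃ w, e w ∈ T)
    (hu : e ⟨u, h.left⟩ ∉ T) (hv : e ⟨v, h.right⟩ ∉ T) :
    ∃ C₀ S₀ T₀, IsVertexCut G C₀ S₀ T₀ ∧ C₀.ncard ≤ C.ncard ∧
      (∀ w : ↥(Iᶜ : Set V), w.1 ∈ S₀ ↔ e w ∈ S) ∧ ∀ w : ↥(Iᶜ : Set V), w.1 ∈ T₀ ↔ e w ∈ T := by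
  obtain ⟨h1, h2, h3, h4, h5⟩ := restrict_cut he hc
  obtain ⟨s, hs⟩ := hS
  obtain ⟨t, ht⟩ := hT
  refine ⟨_, _, _, h.cut_union h1 h2 h3 h4 ⟨s, s, hs, rfl⟩ ⟨t, t, ht, rfl⟩ h5 ?_ ?_,
    ncard_restrict_le hinj (fun _ h => h), ?_, ?_⟩
  · rintro ⟨w, hw, rfl⟩; exact hu hw
  · rintro ⟨w, hw, rfl⟩; exact hv hw
  · intro w
    have hw : w.1 ∉ I := w.2
    rw [Set.mem_union, or_iff_left hw]
    exact Subtype.val_injective.mem_set_image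
  · exact fun w => Subtype.val_injective.mem_set_image

lemma IsPiece.lift_opposite [Finite W] (h : IsPiece G I u v) {e : ↥(Iᶜ : Set V) → W}
    (hinj : Function.Injective e)
    (he : ∀ x y : ↥(Iᶜ : Set V), G.Adj x y → H.Adj (e x) (e y)) {C S T : Set W}
    (hc : IsVertexCut H C S T)
    (hu : e ⟨u, h.left⟩ ∈ S) (hv : e ⟨v, h.right⟩ ∈ T) (hn : ∃ n ∈ C, ∀ w, e w ≠ n)
    (hsep : ∃ a ∈ I, ¬ (restrTo G ((I ∪ {u, v}) \ {a})).Reachable u v) :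
    ∃ C₀ S₀ T₀, IsVertexCut G C₀ S₀ T₀ ∧ C₀.ncard ≤ C.ncard ∧
      (∀ w : ↥(Iᶜ : Set V), w.1 ∈ S₀ ↔ e w ∈ S) ∧ ∀ w : ↥(Iᶜ : Set V), w.1 ∈ T₀ ↔ e w ∈ T := by
  obtain ⟨h1, h2, h3, h4, h5⟩ := restrict_cut he hc
  obtain ⟨a, ha, hsep⟩ := hsep
  obtain ⟨n, hnC, hn⟩ := hn
  obtain ⟨S₀, T₀, hcut, hS₀, hT₀⟩ := h.cut_insert h1 h2 h3 h4 h5 ⟨_, hu, rfl⟩ ⟨_, hv, rfl⟩ ha hsep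
  refine ⟨_, S₀, T₀, hcut, ?_, ?_, ?_⟩
  · -- The separating vertex `a` is paid for by the vertex `n` of `C` outside the range of `e`.
    have hle := ncard_restrict_le (I := I) hinj (C := C) (D := C \ {n}) (fun w hw => ⟨hw, hn w⟩)
    have := Set.ncard_sdiff_singleton_add_one hnC (Set.toFinite C)
    exact (Set.ncard_insert_le _ _).trans (by omega)
  · intro w; exact (hS₀ _ w.2).trans Subtype.val_injective.mem_set_image
  · intro w; exact (hT₀ _ w.2).trans Subtype.val_injective.mem_set_image

/-- The criterion applied to both replacements of `I`: `H` contains `G - I` through `e`, cuts of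
`H` separating `u` from `v` contain a vertex outside `G - I` and can be matched by a single vertex
of `I`, and cuts of `G` of size `< l` pass to `H`. -/
lemma IsPiece.activeCutEquiv [Finite W] (h : IsPiece G I u v) {AG : Set V} {AH : Set W}
    {f : V → W} {l : ℕ} {e : ↥(Iᶜ : Set V) → W} (hinj : Function.Injective e)
    (he : ∀ x y : ↥(Iᶜ : Set V), G.Adj x y → H.Adj (e x) (e y))
    (hA : ∀ x ∈ AG, x ∉ I) (hAH : ∀ z, z ∈ AH ↔ ∃ w : ↥(Iᶜ : Set V), z = e w ∧ w.1 ∈ AG)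
    (hf : ∀ w : ↥(Iᶜ : Set V), w.1 ∈ AG → f w.1 = e w)
    (hopp : ∀ C S T, IsVertexCut H C S T → e ⟨u, h.left⟩ ∈ S → e ⟨v, h.right⟩ ∈ T →
      (∃ n ∈ C, ∀ w, e w ≠ n) ∧
        ∃ a ∈ I, ¬ (restrTo G ((I ∪ {u, v}) \ {a})).Reachable u v)
    (hdown : ∀ C S T, IsVertexCut G C S T → SeparatesV S T AG → C.ncard < l →
      ∃ C' S' T', IsVertexCut H C' S' T' ∧ C'.ncard ≤ C.ncard ∧
        (∀ w : ↥(Iᶜ : Set V), w.1 ∈ S ↔ e w ∈ S') ∧ ∀ w : ↥(Iᶜ : Set V), w.1 ∈ T ↔ e w ∈ T') :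
    ActiveCutEquivVertex G H AG AH f l := by
  have himg : ∀ (S : Set V) (S' : Set W), (∀ w : ↥(Iᶜ : Set V), w.1 ∈ S ↔ e w ∈ S') →
      f '' (AG ∩ S) = AH ∩ S' := by
    intro S S' hS
    ext z
    constructor
    · rintro ⟨x, ⟨hxA, hxS⟩, rfl⟩
      rw [hf ⟨x, hA x hxA⟩ hxA]
      exact ⟨(hAH _).2 ⟨_, rfl, hxA⟩, (hS _).1 hxS⟩
    · rintro ⟨hzA, hzS⟩
      obtain ⟨w, rfl, hw⟩ := (hAH z).1 hzA
      exact ⟨w, ⟨hw, (hS w).2 hzS⟩, hf w hw⟩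
  refine activeCutEquiv_of_transfer ?_ ?_ ?_ ?_ ?_
  · intro x hx
    exact (hAH _).2 ⟨⟨x, hA x hx⟩, hf ⟨x, hA x hx⟩ hx, hx⟩
  · intro z hz
    obtain ⟨w, rfl, hw⟩ := (hAH z).1 hz
    exact ⟨w, hw, hf w hw⟩
  · intro x hx y hy hxy
    rw [hf ⟨x, hA x hx⟩ hx, hf ⟨y, hA y hy⟩ hy] at hxy
    exact congrArg Subtype.val (hinj hxy)
  · intro C S T hc hsep hl
    obtain ⟨C', S', T', h1, h2, h3, h4⟩ := hdown C S T hc hsep hl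
    exact ⟨C', S', T', h1, h2, himg _ _ h3, himg _ _ h4⟩
  · rintro C S T hc ⟨⟨s, hsA, hs⟩, ⟨t, htA, ht⟩⟩
    obtain ⟨s, rfl, -⟩ := (hAH s).1 hsA
    obtain ⟨t, rfl, -⟩ := (hAH t).1 htA
    have hd := Set.disjoint_left.1 hc.2.2.1
    by_cases h1 : e ⟨u, h.left⟩ ∉ T ∧ e ⟨v, h.right⟩ ∉ T
    · obtain ⟨C₀, S₀, T₀, h3, h4, h5, h6⟩ :=
        h.lift_same_side hinj he hc ⟨s, hs⟩ ⟨t, ht⟩ h1.1 h1.2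
      exact ⟨C₀, S₀, T₀, h3, h4, himg _ _ h5, himg _ _ h6⟩
    by_cases h2 : e ⟨u, h.left⟩ ∉ S ∧ e ⟨v, h.right⟩ ∉ S
    · obtain ⟨C₀, T₀, S₀, h3, h4, h5, h6⟩ :=
        h.lift_same_side hinj he hc.swap ⟨t, ht⟩ ⟨s, hs⟩ h2.1 h2.2
      exact ⟨C₀, S₀, T₀, h3.swap, h4, himg _ _ h6, himg _ _ h5⟩
    by_cases hu : e ⟨u, h.left⟩ ∈ S
    · have hv : e ⟨v, h.right⟩ ∈ T := by
        by_contra hv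
        exact h1 ⟨hd hu, hv⟩
      obtain ⟨hn, hs⟩ := hopp C S T hc hu hv
      obtain ⟨C₀, S₀, T₀, h3, h4, h5, h6⟩ := h.lift_opposite hinj he hc hu hv hn hs
      exact ⟨C₀, S₀, T₀, h3, h4, himg _ _ h5, himg _ _ h6⟩
    · have hv : e ⟨v, h.right⟩ ∈ S := by
        by_contra hv
        exact h2 ⟨hu, hv⟩
      have hu' : e ⟨u, h.left⟩ ∈ T := by
        by_contra hu'
        exact h1 ⟨hu', hd hv⟩
      obtain ⟨hn, hs⟩ := hopp C T S hc.swap hu' hv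
      obtain ⟨C₀, T₀, S₀, h3, h4, h5, h6⟩ := h.lift_opposite hinj he hc.swap hu' hv hn hs
      exact ⟨C₀, S₀, T₀, h3.swap, h4, himg _ _ h6, himg _ _ h5⟩

/-- Cuts of `G` that do not separate `u` from `v` restrict to `G - I` plus the edge `uv`. -/
lemma cut_restrict_edge [Finite V] {H : SimpleGraph ↥(Iᶜ : Set V)}
    (hH : ∀ x y : ↥(Iᶜ : Set V), H.Adj x y →
      G.Adj x y ∨ (x.1 = u ∧ y.1 = v) ∨ (x.1 = v ∧ y.1 = u)) {C S T : Set V}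
    (hc : IsVertexCut G C S T) (hS : ∃ s ∈ S, s ∉ I) (hT : ∃ t ∈ T, t ∉ I)
    (h1 : ¬ (u ∈ S ∧ v ∈ T)) (h2 : ¬ (v ∈ S ∧ u ∈ T)) :
    IsVertexCut H (Subtype.val ⁻¹' C) (Subtype.val ⁻¹' S) (Subtype.val ⁻¹' T) ∧
      (Subtype.val ⁻¹' C : Set ↥(Iᶜ : Set V)).ncard ≤ C.ncard := by
  obtain ⟨c1, c2, c3, c4, -, -, c7⟩ := hc
  obtain ⟨s, hs, hsI⟩ := hS
  obtain ⟨t, ht, htI⟩ := hT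
  refine ⟨⟨c1.preimage _, c2.preimage _, c3.preimage _, ?_, ⟨⟨s, hsI⟩, hs⟩, ⟨⟨t, htI⟩, ht⟩, ?_⟩, ?_⟩
  · rw [← Set.preimage_union, ← Set.preimage_union, c4, Set.preimage_univ]
  · rintro ⟨a, haI⟩ ha ⟨b, hbI⟩ hb hab
    rcases hH _ _ hab with h | ⟨rfl, rfl⟩ | ⟨rfl, rfl⟩
    exacts [c7 a ha b hb h, h1 ⟨ha, hb⟩, h2 ⟨ha, hb⟩]
  · rw [← Set.ncard_image_of_injective _ Subtype.val_injective]
    exact Set.ncard_le_ncard (Set.image_preimage_subset _ _) (Set.toFinite C)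

/-- If the cut vertices of `G` meet `I`, the vertex replacing `I` is put into the cut. -/
lemma cut_contract_mem [Finite V] {H : SimpleGraph (Option ↥(Iᶜ : Set V))}
    (hH : ∀ x y : ↥(Iᶜ : Set V), H.Adj (some x) (some y) → G.Adj x y) {C S T : Set V}
    (hc : IsVertexCut G C S T) (hS : ∃ s ∈ S, s ∉ I) (hT : ∃ t ∈ T, t ∉ I)
    (hCI : (C ∩ I).Nonempty) :
    ∃ C' S' T', IsVertexCut H C' S' T' ∧ C'.ncard ≤ C.ncard ∧
      (∀ w : ↥(Iᶜ : Set V), w.1 ∈ S ↔ some w ∈ S') ∧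
      ∀ w : ↥(Iᶜ : Set V), w.1 ∈ T ↔ some w ∈ T' := by
  classical
  obtain ⟨c1, c2, c3, c4, -, -, c7⟩ := hc
  rw [Set.disjoint_left] at c1 c2 c3
  have c4' : ∀ x, (x ∈ C ∨ x ∈ S) ∨ x ∈ T := fun x => c4.symm.subset (Set.mem_univ x)
  obtain ⟨s, hs, hsI⟩ := hS
  obtain ⟨t, ht, htI⟩ := hT
  obtain ⟨c, hcC, hcI⟩ := hCI
  refine ⟨{z | ∀ w, z = some w → w.1 ∈ C}, {z | ∃ w, z = some w ∧ w.1 ∈ S},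
    {z | ∃ w, z = some w ∧ w.1 ∈ T}, ⟨?_, ?_, ?_, ?_, ⟨some ⟨s, hsI⟩, _, rfl, hs⟩,
    ⟨some ⟨t, htI⟩, _, rfl, ht⟩, ?_⟩, ?_, ?_, ?_⟩
  · rw [Set.disjoint_left]
    rintro _ h ⟨w, rfl, hw⟩
    exact c1 (h w rfl) hw
  · rw [Set.disjoint_left]
    rintro _ h ⟨w, rfl, hw⟩
    exact c2 (h w rfl) hw
  · rw [Set.disjoint_left]
    rintro _ ⟨w, rfl, hw⟩ ⟨w', h, hw'⟩
    cases h
    exact c3 hw hw'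
  · ext z
    cases z with
    | none => simp
    | some w =>
      exact iff_of_true ((c4' w.1).imp
        (Or.imp forall_some_eq_imp.2 exists_some_eq_and.2) exists_some_eq_and.2) trivial
  · rintro _ ⟨a, rfl, ha⟩ _ ⟨b, rfl, hb⟩ hab
    exact c7 _ ha _ hb (hH a b hab)
  · refine (Set.ncard_le_ncard ?_ (Set.toFinite _)).trans
      (Set.ncard_image_le (f := fun x => if hx : x ∈ I then none else some ⟨x, hx⟩) (Set.toFinite C))
    rintro (_ | w) hz
    · exact ⟨c, hcC, by simp [hcI]⟩
    · exact ⟨w.1, hz w rfl, by simp [show w.1 ∉ I from w.2]⟩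
  · exact fun w => (exists_some_eq_and (P := fun y : ↥(Iᶜ : Set V) => y.1 ∈ S)).symm
  · exact fun w => (exists_some_eq_and (P := fun y : ↥(Iᶜ : Set V) => y.1 ∈ T)).symm

/-- If `I` lies on the side `S`, the vertex replacing `I` is put on the same side. -/
lemma IsPiece.cut_contract_subset [Finite V] (h : IsPiece G I u v)
    (hnocut : ∀ w : V, (G.induce ({w}ᶜ : Set V)).Preconnected)
    {H : SimpleGraph (Option ↥(Iᶜ : Set V))}
    (hH : ∀ x y : ↥(Iᶜ : Set V), H.Adj (some x) (some y) → G.Adj x y)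
    (hHn : ∀ y : ↥(Iᶜ : Set V), H.Adj none (some y) → y.1 = u ∨ y.1 = v) {C S T : Set V}
    (hc : IsVertexCut G C S T) (hS : ∃ s ∈ S, s ∉ I) (hT : ∃ t ∈ T, t ∉ I)
    (hIS : I ⊆ S) :
    ∃ C' S' T', IsVertexCut H C' S' T' ∧ C'.ncard ≤ C.ncard ∧
      (∀ w : ↥(Iᶜ : Set V), w.1 ∈ S ↔ some w ∈ S') ∧
      ∀ w : ↥(Iᶜ : Set V), w.1 ∈ T ↔ some w ∈ T' := by
  obtain ⟨c1, c2, c3, c4, -, -, c7⟩ := hc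
  rw [Set.disjoint_left] at c1 c2 c3
  have c4' : ∀ x, (x ∈ C ∨ x ∈ S) ∨ x ∈ T := fun x => c4.symm.subset (Set.mem_univ x)
  -- `u` and `v` have neighbours in `I`, so they are not on the side `T`.
  obtain ⟨a, haI, hua⟩ := h.exists_adj_left hnocut
  obtain ⟨b, hbI, hvb⟩ := h.swap.exists_adj_left hnocut
  have huT : u ∉ T := fun hu => c7 a (hIS haI) u hu hua.symm
  have hvT : v ∉ T := fun hv => c7 b (hIS hbI) v hv hvb.symm
  obtain ⟨s, hs, hsI⟩ := hS
  obtain ⟨t, ht, htI⟩ := hT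
  refine ⟨{z | ∃ w, z = some w ∧ w.1 ∈ C}, {z | ∀ w, z = some w → w.1 ∈ S},
    {z | ∃ w, z = some w ∧ w.1 ∈ T}, ⟨?_, ?_, ?_, ?_, ⟨none, by simp⟩,
    ⟨some ⟨t, htI⟩, _, rfl, ht⟩, ?_⟩, ?_, ?_, ?_⟩
  · rw [Set.disjoint_left]
    rintro _ ⟨w, rfl, hw⟩ h
    exact c1 hw (h w rfl)
  · rw [Set.disjoint_left]
    rintro _ ⟨w, rfl, hw⟩ ⟨w', h, hw'⟩
    cases h
    exact c2 hw hw'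
  · rw [Set.disjoint_left]
    rintro _ h ⟨w, rfl, hw⟩
    exact c3 (h w rfl) hw
  · ext z
    cases z with
    | none => simp
    | some w =>
      exact iff_of_true ((c4' w.1).imp
        (Or.imp exists_some_eq_and.2 forall_some_eq_imp.2) exists_some_eq_and.2) trivial
  · rintro (_ | a) ha _ ⟨b, rfl, hb⟩ hab
    · rcases hHn b hab with h | h
      exacts [huT (h ▸ hb), hvT (h ▸ hb)]
    · exact c7 _ (ha a rfl) _ hb (hH a b hab)
  · have hset : {z : Option ↥(Iᶜ : Set V) | ∃ w, z = some w ∧ w.1 ∈ C} =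
        some '' (Subtype.val ⁻¹' C) := by
      ext z
      exact ⟨fun ⟨w, h1, h2⟩ => ⟨w, h2, h1.symm⟩, fun ⟨w, h1, h2⟩ => ⟨w, h2.symm, h1⟩⟩
    rw [hset, Set.ncard_image_of_injective _ (Option.some_injective _),
      ← Set.ncard_image_of_injective _ Subtype.val_injective]
    exact Set.ncard_le_ncard (Set.image_preimage_subset _ _) (Set.toFinite C)
  · exact fun w => (forall_some_eq_imp (P := fun y : ↥(Iᶜ : Set V) => y.1 ∈ S)).symm
  · exact fun w => (exists_some_eq_and (P := fun y : ↥(Iᶜ : Set V) => y.1 ∈ T)).symm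

/-- A cut avoiding the connected set `I` has `I` on one side. -/
lemma IsPiece.subset_side (h : IsPiece G I u v) {C S T : Set V} (hc : IsVertexCut G C S T)
    (hCI : ¬ (C ∩ I).Nonempty) : I ⊆ S ∨ I ⊆ T := by
  obtain ⟨c1, c2, c3, c4, -, -, c7⟩ := hc
  have hmem : ∀ x ∈ I, x ∈ S ∨ x ∈ T := by
    intro x hx
    rcases c4.symm.subset (Set.mem_univ x) with (h | h) | h
    exacts [absurd ⟨x, h, hx⟩ hCI, Or.inl h, Or.inr h]
  by_cases hS : ∃ x ∈ I, x ∈ S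
  · refine Or.inl (h.conn S hS ?_)
    intro a _ haS b hb hab
    exact (hmem b hb).resolve_right (fun hbT => c7 a haS b hbT hab)
  · push Not at hS
    exact Or.inr fun x hx => (hmem x hx).resolve_left (hS x hx)

end Transfer

/-! ### The replacement theorem -/

theorem stmt12 {V : Type*} [Fintype V] (G : SimpleGraph V) (AG : Set V)
    (hconn : G.Connected) (hcard : 3 ≤ Fintype.card V)
    (hnocut : ∀ w : V, (G.induce ({w}ᶜ : Set V)).Preconnected)
    (u v : V) (hsp : IsSplitPair G u v)
    (G' : G.Subgraph) (hsc : IsSplitComponent G u v G')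
    (hnotedge : G'.verts ≠ {u, v})
    (hinact : ∀ x ∈ G'.verts, x ≠ u → x ≠ v → x ∉ AG)
    (H₁ : SimpleGraph ↥((G'.verts \ {u, v})ᶜ : Set V))
    (hH₁ : ∀ x y : ↥((G'.verts \ {u, v})ᶜ : Set V), H₁.Adj x y ↔
      ((G.Adj x.val y.val ∧ ¬ G'.Adj x.val y.val) ∨
        (x.val = u ∧ y.val = v) ∨ (x.val = v ∧ y.val = u)))
    (f₁ : V → ↥((G'.verts \ {u, v})ᶜ : Set V)) (hf₁ : ∀ x ∈ AG, (f₁ x).val = x)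
    (H₂ : SimpleGraph (Option ↥((G'.verts \ {u, v})ᶜ : Set V)))
    (hH₂ : ∀ z w : Option ↥((G'.verts \ {u, v})ᶜ : Set V), H₂.Adj z w ↔
      ((∃ x y : ↥((G'.verts \ {u, v})ᶜ : Set V), z = some x ∧ w = some y ∧
          G.Adj x.val y.val ∧ ¬ G'.Adj x.val y.val) ∨
        (z = none ∧ ∃ y : ↥((G'.verts \ {u, v})ᶜ : Set V), w = some y ∧
          (y.val = u ∨ y.val = v)) ∨
        (w = none ∧ ∃ x : ↥((G'.verts \ {u, v})ᶜ : Set V), z = some x ∧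
          (x.val = u ∨ x.val = v))))
    (f₂ : V → Option ↥((G'.verts \ {u, v})ᶜ : Set V))
    (hf₂ : ∀ x ∈ AG, ∃ y : ↥((G'.verts \ {u, v})ᶜ : Set V),
      f₂ x = some y ∧ y.val = x) :
    (ThreeInternallyDisjointPaths G u v →
      ActiveCutEquivVertex G H₁ AG (Subtype.val ⁻¹' AG) f₁ 3) ∧
    (¬ ThreeInternallyDisjointPaths G u v →
      ActiveCutEquivVertex G H₂ AG
        {z | ∃ y : ↥((G'.verts \ {u, v})ᶜ : Set V), z = some y ∧ y.val ∈ AG}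
        f₂ 3) := by
  have huv := hsp.1
  have hne : (G'.verts \ {u, v}).Nonempty := by
    rw [Set.nonempty_iff_ne_empty, Ne, Set.sdiff_eq_empty]
    intro hsub
    refine hnotedge (hsub.antisymm ?_)
    rintro x (rfl | rfl)
    exacts [hsc.1.1, hsc.1.2.1]
  have h := hsc.isPiece huv hne
  have hA : ∀ x ∈ AG, x ∉ G'.verts \ {u, v} := by
    intro x hxA hx
    simp only [Set.mem_sdiff, Set.mem_insert_iff, Set.mem_singleton_iff, not_or] at hx
    exact hinact x hx.1 hx.2.1 hx.2.2 hxA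
  -- Outside its interior, the only possible edge of the split component is `uv`.
  have hG' : ∀ x y : ↥((G'.verts \ {u, v})ᶜ : Set V), G'.Adj x.1 y.1 →
      (x.1 = u ∧ y.1 = v) ∨ (x.1 = v ∧ y.1 = u) := by
    intro x y hxy
    have hx : x.1 = u ∨ x.1 = v := by
      by_contra hx
      exact x.2 ⟨hxy.fst_mem, hx⟩
    have hy : y.1 = u ∨ y.1 = v := by
      by_contra hy
      exact y.2 ⟨hxy.snd_mem, hy⟩
    have := hxy.ne
    grind
  have hsides : ∀ {S T : Set V}, SeparatesV S T AG →
      (∃ s ∈ S, s ∉ G'.verts \ {u, v}) ∧ ∃ t ∈ T, t ∉ G'.verts \ {u, v} :=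
    fun ⟨⟨s, hsA, hs⟩, ⟨t, htA, ht⟩⟩ => ⟨⟨s, hs, hA s hsA⟩, ⟨t, ht, hA t htA⟩⟩
  constructor
  · intro hthree
    have hadj : H₁.Adj ⟨u, h.left⟩ ⟨v, h.right⟩ := (hH₁ _ _).2 (Or.inr (Or.inl ⟨rfl, rfl⟩))
    refine h.activeCutEquiv (e := id) Function.injective_id ?_ hA ?_ ?_ ?_ ?_
    · intro x y hxy
      refine (hH₁ x y).2 ?_
      by_cases hg : G'.Adj x.1 y.1
      exacts [Or.inr (hG' x y hg), Or.inl ⟨hxy, hg⟩]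
    · intro z
      exact ⟨fun hz => ⟨z, rfl, hz⟩, fun ⟨w, hw, hwA⟩ => hw ▸ hwA⟩
    · intro w hw
      exact Subtype.ext (hf₁ w.1 hw)
    · intro C S T hc hu hv
      exact absurd hadj (hc.2.2.2.2.2.2 _ hu _ hv)
    · intro C S T hc hsep hl
      obtain ⟨hS, hT⟩ := hsides hsep
      obtain ⟨h1, h2⟩ := cut_restrict_edge (u := u) (v := v) (H := H₁)
        (fun x y hxy => ((hH₁ x y).1 hxy).imp_left And.left) hc hS hT
        (fun ⟨hu, hv⟩ => absurd (three_le_ncard_of_paths hthree hc hu hv) (not_le.2 hl))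
        (fun ⟨hv, hu⟩ => absurd (three_le_ncard_of_paths hthree hc.swap hu hv) (not_le.2 hl))
      exact ⟨_, _, _, h1, h2, fun _ => Iff.rfl, fun _ => Iff.rfl⟩
  · intro hthree
    -- An edge `uv` counts as three paths with no common internal vertex.
    have hnadj : ¬ G.Adj u v := by
      intro hadj
      refine hthree ⟨hadj.toWalk, hadj.toWalk, hadj.toWalk, ?_, ?_, ?_, ?_, ?_, ?_⟩ <;>
        simp [SimpleGraph.Adj.toWalk, hadj.ne]
    obtain ⟨o, hoI, hou, hov⟩ : ∃ o, o ∉ G'.verts \ {u, v} ∧ o ≠ u ∧ o ≠ v := by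
      by_contra! hcon
      have hmem : ∀ x, x ∈ ({u, v}ᶜ : Set V) → x ∈ G'.verts \ {u, v} := by
        intro x hx
        by_contra hxI
        exact hx (by
          by_cases hxu : x = u
          exacts [Or.inl hxu, Or.inr (hcon x hxI hxu)])
      refine hsp.2.resolve_left hnadj |>.elim ?_
      rintro ⟨a, ha⟩ ⟨b, hb⟩
      have := h.conn {x | ∃ hx, (G.induce ({u, v}ᶜ : Set V)).Reachable ⟨a, ha⟩ ⟨x, hx⟩}
        ⟨a, hmem a ha, ha, .rfl⟩ ?_ (hmem b hb)
      · exact this.2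
      · rintro x _ ⟨hx, hax⟩ y hy hxy
        have hadj : (G.induce ({u, v}ᶜ : Set V)).Adj ⟨x, hx⟩ ⟨y, hy.2⟩ := hxy
        exact ⟨hy.2, hax.trans hadj.reachable⟩
    have hsome : ∀ x y : ↥((G'.verts \ {u, v})ᶜ : Set V),
        H₂.Adj (some x) (some y) ↔ G.Adj x.1 y.1 := by
      intro x y
      rw [hH₂]
      constructor
      · rintro (⟨x', y', hx, hy, h1, -⟩ | ⟨h1, -⟩ | ⟨h1, -⟩)
        · cases hx; cases hy; exact h1
        · cases h1
        · cases h1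
      · intro hxy
        refine Or.inl ⟨x, y, rfl, rfl, hxy, fun hg => hnadj ?_⟩
        rcases hG' x y hg with ⟨h1, h2⟩ | ⟨h1, h2⟩
        · rwa [h1, h2] at hxy
        · rw [h1, h2] at hxy; exact hxy.symm
    have hnone : ∀ y : ↥((G'.verts \ {u, v})ᶜ : Set V),
        H₂.Adj none (some y) ↔ (y.1 = u ∨ y.1 = v) := by
      intro y
      rw [hH₂]
      simp
    refine h.activeCutEquiv (e := some) (Option.some_injective _) (fun x y => (hsome x y).2) hA
      (fun z => Iff.rfl) ?_ ?_ ?_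
    · intro w hw
      obtain ⟨y, hy, hyw⟩ := hf₂ w.1 hw
      rw [hy, Subtype.ext hyw]
    · intro C S T hc hu hv
      refine ⟨⟨none, ?_, by simp⟩, h.exists_separator hnocut hthree hoI hou hov⟩
      rcases hc.2.2.2.1.symm.subset (Set.mem_univ none) with (h1 | h1) | h1
      · exact h1
      · exact absurd ((hnone _).2 (Or.inr rfl)) (hc.2.2.2.2.2.2 _ h1 _ hv)
      · exact absurd ((hnone _).2 (Or.inl rfl)).symm (hc.2.2.2.2.2.2 _ hu _ h1)
    · intro C S T hc hsep _
      obtain ⟨hS, hT⟩ := hsides hsep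
      by_cases hCI : (C ∩ (G'.verts \ {u, v})).Nonempty
      · exact cut_contract_mem (fun x y => (hsome x y).1) hc hS hT hCI
      rcases h.subset_side hc hCI with hI | hI
      · exact h.cut_contract_subset hnocut (fun x y => (hsome x y).1) (fun y => (hnone y).1)
          hc hS hT hI
      · obtain ⟨C', T', S', h1, h2, h3, h4⟩ :=
          h.cut_contract_subset hnocut (fun x y => (hsome x y).1) (fun y => (hnone y).1)
            hc.swap hT hS hI
        exact ⟨C', S', T', h1.swap, h2, h4, h3⟩
end
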